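/- arXiv:2310.00376 — 2 statements merged into one kernel-verified Lean document; each statement's English description precedes it below -/
import Mathlib

section
/- (Nonergodic convergence of IADMM iterates, Theorem 3.5.) Assume the IADMM setting, suppose a KKT solution of problem (P) exists, and suppose there is a positive definite matrix Θ such that β_kP_k + β_k²BᵀB ⪰ Θ for all k ≥ 1. Then the sequence (y^k, z^k, λ^k) converges, as k → ∞, to a limit (y*, z*, λ*) that is a KKT solution of problem (P). -/
/-!
Fejér-type argument with a time-varying metric.

Monotonicity of `∂f` and strong monotonicity of `∂g`, applied to one step and to a KKT point
`(y*, z*, λ*)`, give a descent estimate (`descent_basic`) for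
`γ⁻¹‖λ - λ*‖² + β‖y - y*‖²_P + β²‖z - z*‖²_{CᵀC + Q}`, up to the unsigned term
`-2β²⟨C Δz, r⟩`, where `r = By + Cz - b`. Comparing two consecutive `z`-steps (`cross_term`) bounds
that term by multiples of `β²‖r‖²` and `β²‖Δz‖²_Q` at consecutive indices, which telescope because
`(γ - 1)² < 2 - γ`, that is `1 + γ - γ² > 0`. The increase of `β` is paid for by strong convexity
(`z_weight`). The result is `lyap_step`: the Lyapunov function `lyap` decreases by at least
`dissip` at every step, whatever the KKT point. Hence `∑ β_k ‖z^{k+1} - z*‖²` converges, so that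
`z → z*`, and `β r`, `β C Δz`, `β Q Δz` and `P Δy` tend to `0` even when `β` is unbounded.

The function `lyap` dominates `‖λ - λ*‖²` and, by the uniform positive definiteness of
`β P + β² BᵀB`, also `‖y - y*‖²` (`y_error`). The iterates are therefore bounded and their limit
points are KKT points (`kkt_of_subseq`). To conclude, `lyap` relative to a limit point must tend
to `0` along a subsequence. The delicate term is `β²‖z - z*‖²`, since `β` may be unbounded; but
`β_k` grows at most linearly and `∑ 1/k` diverges, so the convergence of `∑ β_k ‖z^{k+1} - z*‖²`
yields a subsequence with `β_k² ‖z^{k+1} - z*‖² → 0` (`exists_subseq_weighted`). The limit point is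
chosen along that subsequence. As `lyap` is nonincreasing, it tends to `0` along the whole sequence.
-/

open Matrix Filter

/-- Euclidean norm of a vector in `ℝ^n`. -/
noncomputable def vnorm {n : ℕ} (w : Fin n → ℝ) : ℝ := Real.sqrt (w ⬝ᵥ w)

/-- `ξ` is a subgradient of the convex function `h` at `u`. -/
def IsSubgradient {p : ℕ} (h : (Fin p → ℝ) → ℝ) (ξ u : Fin p → ℝ) : Prop :=
  ∀ w, h w ≥ h u + ξ ⬝ᵥ (w - u)

/-- The largest eigenvalue of a symmetric matrix, as the supremum of the
Rayleigh quotient over unit vectors. -/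
noncomputable def lamMax {n : ℕ} (A : Matrix (Fin n) (Fin n) ℝ) : ℝ :=
  sSup { r | ∃ w : Fin n → ℝ, w ⬝ᵥ w = 1 ∧ w ⬝ᵥ A *ᵥ w = r }

/-! ### Quadratic forms -/

lemma quad_symm {n : ℕ} {A : Matrix (Fin n) (Fin n) ℝ} (hA : A.PosSemidef)
    (x w : Fin n → ℝ) : x ⬝ᵥ A *ᵥ w = w ⬝ᵥ A *ᵥ x := by
  have h : Aᵀ = A := by simpa using hA.isHermitian.eq
  rw [dotProduct_mulVec, dotProduct_comm, ← mulVec_transpose, h]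

lemma quad_nonneg {n : ℕ} {A : Matrix (Fin n) (Fin n) ℝ} (hA : A.PosSemidef)
    (x : Fin n → ℝ) : 0 ≤ x ⬝ᵥ A *ᵥ x := by
  simpa using hA.dotProduct_mulVec_nonneg x

lemma dot_self_nonneg {n : ℕ} (x : Fin n → ℝ) : 0 ≤ x ⬝ᵥ x :=
  Finset.sum_nonneg fun i _ => mul_self_nonneg (x i)

lemma transpose_dot {p q : ℕ} (A : Matrix (Fin p) (Fin q) ℝ) (x : Fin p → ℝ) (w : Fin q → ℝ) :
    (Aᵀ *ᵥ x) ⬝ᵥ w = x ⬝ᵥ A *ᵥ w := by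
  rw [dotProduct_mulVec, mulVec_transpose]

lemma quad_sub {n : ℕ} {A : Matrix (Fin n) (Fin n) ℝ} (hA : A.PosSemidef)
    (x w : Fin n → ℝ) :
    (x - w) ⬝ᵥ A *ᵥ (x - w) = x ⬝ᵥ A *ᵥ x - 2 * (x ⬝ᵥ A *ᵥ w) + w ⬝ᵥ A *ᵥ w := by
  simp only [mulVec_sub, sub_dotProduct, dotProduct_sub, quad_symm hA w x]; ring

lemma dot_sub_self {n : ℕ} (x w : Fin n → ℝ) :
    (x - w) ⬝ᵥ (x - w) = x ⬝ᵥ x - 2 * (x ⬝ᵥ w) + w ⬝ᵥ w := by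
  simp only [sub_dotProduct, dotProduct_sub, dotProduct_comm w x]; ring

lemma dot_add_self {n : ℕ} (x w : Fin n → ℝ) :
    (x + w) ⬝ᵥ (x + w) = x ⬝ᵥ x + 2 * (x ⬝ᵥ w) + w ⬝ᵥ w := by
  simp only [add_dotProduct, dotProduct_add, dotProduct_comm w x]; ring

/-- Young's inequality for the semi-inner product of a positive semidefinite matrix. -/
lemma quad_young {n : ℕ} {A : Matrix (Fin n) (Fin n) ℝ} (hA : A.PosSemidef)
    (s t : ℝ) (x w : Fin n → ℝ) :
    2 * (s * t * (x ⬝ᵥ A *ᵥ w)) ≤ s ^ 2 * (x ⬝ᵥ A *ᵥ x) + t ^ 2 * (w ⬝ᵥ A *ᵥ w) := by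
  have h := quad_nonneg hA (s • x - t • w)
  rw [quad_sub hA] at h
  simp only [mulVec_smul, smul_dotProduct, dotProduct_smul, smul_eq_mul] at h
  linarith

lemma dot_young {n : ℕ} (s t : ℝ) (x w : Fin n → ℝ) :
    2 * (s * t * (x ⬝ᵥ w)) ≤ s ^ 2 * (x ⬝ᵥ x) + t ^ 2 * (w ⬝ᵥ w) := by
  simpa using quad_young (Matrix.PosSemidef.one : (1 : Matrix (Fin n) (Fin n) ℝ).PosSemidef) s t x w

/-- Cauchy-Schwarz inequality for the semi-inner product of a positive semidefinite matrix. -/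
lemma quad_cauchy {n : ℕ} {A : Matrix (Fin n) (Fin n) ℝ} (hA : A.PosSemidef)
    (x w : Fin n → ℝ) : (x ⬝ᵥ A *ᵥ w) ^ 2 ≤ (x ⬝ᵥ A *ᵥ x) * (w ⬝ᵥ A *ᵥ w) := by
  have h : ∀ t : ℝ, 0 ≤ (w ⬝ᵥ A *ᵥ w) * (t * t) + (-2 * (x ⬝ᵥ A *ᵥ w)) * t + x ⬝ᵥ A *ᵥ x := by
    intro t
    have := quad_young hA 1 t x w
    linarith
  have := discrim_le_zero h
  unfold discrim at this
  linarith

/-- `A² ⪯ l A` whenever `0 ⪯ A ⪯ l`. -/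
lemma mulVec_sq_le {n : ℕ} {A : Matrix (Fin n) (Fin n) ℝ} (hA : A.PosSemidef) {l : ℝ}
    (hl : ∀ w, w ⬝ᵥ A *ᵥ w ≤ l * (w ⬝ᵥ w)) (x : Fin n → ℝ) :
    (A *ᵥ x) ⬝ᵥ (A *ᵥ x) ≤ l * (x ⬝ᵥ A *ᵥ x) := by
  set w := A *ᵥ x with hw
  have h1 : w ⬝ᵥ w = x ⬝ᵥ A *ᵥ w := by rw [quad_symm hA]
  have h2 := quad_cauchy hA x w
  rw [← h1] at h2
  have h3 : (w ⬝ᵥ w) * (w ⬝ᵥ w) ≤ (l * (x ⬝ᵥ A *ᵥ x)) * (w ⬝ᵥ w) := by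
    have := mul_le_mul_of_nonneg_left (hl w) (quad_nonneg hA x)
    rw [← hw] at *
    nlinarith
  rcases (dot_self_nonneg w).eq_or_lt with h0 | h0
  · have : w = 0 := dotProduct_self_eq_zero.1 h0.symm
    simp [this]
  · exact le_of_mul_le_mul_right h3 h0

/-- The supremum defining `lamMax` is taken over a bounded set, so the Rayleigh bound holds; in
dimension `0` both sides vanish. -/
lemma lamMax_bound {n : ℕ} (A : Matrix (Fin n) (Fin n) ℝ) (w : Fin n → ℝ) :
    w ⬝ᵥ A *ᵥ w ≤ lamMax A * (w ⬝ᵥ w) := by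
  have hbdd : BddAbove { r | ∃ w : Fin n → ℝ, w ⬝ᵥ w = 1 ∧ w ⬝ᵥ A *ᵥ w = r } := by
    refine ⟨∑ i, ∑ j, |A i j|, ?_⟩
    rintro r ⟨x, hx, rfl⟩
    have hx1 : ∀ i, |x i| ≤ 1 := fun i => by
      have : x i * x i ≤ x ⬝ᵥ x :=
        Finset.single_le_sum (f := fun i => x i * x i) (fun i _ => mul_self_nonneg (x i))
          (Finset.mem_univ i)
      rw [abs_le]; constructor <;> nlinarith
    simp only [dotProduct, mulVec, Finset.mul_sum]
    refine Finset.sum_le_sum fun i _ => Finset.sum_le_sum fun j _ => ?_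
    calc x i * (A i j * x j) ≤ |x i * (A i j * x j)| := le_abs_self _
      _ = |x i| * |x j| * |A i j| := by rw [abs_mul, abs_mul]; ring
      _ ≤ 1 * |A i j| := by
        gcongr
        exact mul_le_one₀ (hx1 i) (abs_nonneg _) (hx1 j)
      _ = |A i j| := one_mul _
  rcases (dot_self_nonneg w).eq_or_lt with h0 | h0
  · have : w = 0 := dotProduct_self_eq_zero.1 h0.symm
    simp [this]
  · set s := Real.sqrt (w ⬝ᵥ w) with hs
    have hs0 : 0 < s := Real.sqrt_pos.2 h0
    have hs2 : s * s = w ⬝ᵥ w := Real.mul_self_sqrt h0.le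
    have := le_csSup hbdd ⟨s⁻¹ • w, by
      simp only [smul_dotProduct, dotProduct_smul, smul_eq_mul, ← hs2]; field_simp, rfl⟩
    simp only [mulVec_smul, smul_dotProduct, dotProduct_smul, smul_eq_mul] at this
    rw [← hs2]
    change s⁻¹ * (s⁻¹ * _) ≤ lamMax A at this
    have h3 := mul_le_mul_of_nonneg_right this (mul_self_nonneg s)
    have h4 : s⁻¹ * (s⁻¹ * (w ⬝ᵥ A *ᵥ w)) * (s * s) = w ⬝ᵥ A *ᵥ w := by field_simp
    linarith

/-- Coercivity of a positive definite form; the constant is the largest eigenvalue of `A⁻¹`. -/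
lemma posDef_lower {n : ℕ} {A : Matrix (Fin n) (Fin n) ℝ} (hA : A.PosDef) :
    ∃ l : ℝ, 0 ≤ l ∧ ∀ w : Fin n → ℝ, w ⬝ᵥ w ≤ l * (w ⬝ᵥ A *ᵥ w) := by
  refine ⟨max (lamMax A⁻¹) 0, le_max_right _ _, fun w => ?_⟩
  have hu : IsUnit A.det := (Matrix.isUnit_iff_isUnit_det A).1 hA.isUnit
  have h1 := mulVec_sq_le (l := max (lamMax A⁻¹) 0) hA.inv.posSemidef (fun x =>
    (lamMax_bound A⁻¹ x).trans (mul_le_mul_of_nonneg_right (le_max_left _ _) (dot_self_nonneg x)))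
    (A *ᵥ w)
  rw [mulVec_mulVec, Matrix.nonsing_inv_mul A hu, one_mulVec, dotProduct_comm (A *ᵥ w)] at h1
  exact h1

/-! ### One step of the method -/

/-- Strong monotonicity of the subdifferential; `σ = 0` is plain monotonicity. -/
lemma subgradient_monotone {p : ℕ} {h : (Fin p → ℝ) → ℝ} {σ : ℝ}
    (hs : ∀ u ξ, IsSubgradient h ξ u → ∀ w,
        h w ≥ h u + ξ ⬝ᵥ (w - u) + σ / 2 * ((w - u) ⬝ᵥ (w - u)))
    {ξ ξ' u u' : Fin p → ℝ} (h1 : IsSubgradient h ξ u) (h2 : IsSubgradient h ξ' u') :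
    σ * ((u - u') ⬝ᵥ (u - u')) ≤ (ξ - ξ') ⬝ᵥ (u - u') := by
  have a := hs u ξ h1 u'
  have c := hs u' ξ' h2 u
  rw [← neg_sub u u'] at a
  simp only [neg_dotProduct, dotProduct_neg, neg_neg] at a
  rw [sub_dotProduct ξ ξ']
  linarith

/-- One step of the method, measured against a saddle point: `u, v, μ` are the errors of the
primal blocks and of the multiplier before the step, primes mark the errors after it, and `r'` is
the new residual. The term `C (v' - v) ⬝ᵥ r'` still has no sign. -/
lemma descent_basic {m n₁ n₂ : ℕ} (B : Matrix (Fin m) (Fin n₁) ℝ) (C : Matrix (Fin m) (Fin n₂) ℝ)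
    {Q : Matrix (Fin n₂) (Fin n₂) ℝ} {P : Matrix (Fin n₁) (Fin n₁) ℝ}
    (hQ : Q.PosSemidef) (hP : P.PosSemidef) {β γ σ : ℝ} (hβ : 0 < β) (hγ : 0 < γ)
    {u u' : Fin n₁ → ℝ} {v v' : Fin n₂ → ℝ} {μ μ' r' : Fin m → ℝ}
    (hr : B *ᵥ u' + C *ᵥ v' = r') (hμ : μ' = μ + (γ * β) • r')
    (hF : 0 ≤ (-(Bᵀ *ᵥ μ + β • (Bᵀ *ᵥ (r' - C *ᵥ (v' - v))) + P *ᵥ (u' - u))) ⬝ᵥ u')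
    (hG : σ * (v' ⬝ᵥ v') ≤ (-(Cᵀ *ᵥ μ + β • (Cᵀ *ᵥ r') + β • (Q *ᵥ (v' - v)))) ⬝ᵥ v') :
    γ⁻¹ * (μ' ⬝ᵥ μ') + β * (u' ⬝ᵥ P *ᵥ u')
      + β ^ 2 * ((C *ᵥ v') ⬝ᵥ (C *ᵥ v') + v' ⬝ᵥ Q *ᵥ v') + 2 * σ * β * (v' ⬝ᵥ v')
      + (2 - γ) * (β ^ 2 * (r' ⬝ᵥ r'))
      + β ^ 2 * ((C *ᵥ (v' - v)) ⬝ᵥ (C *ᵥ (v' - v)) + (v' - v) ⬝ᵥ Q *ᵥ (v' - v))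
      + β * ((u' - u) ⬝ᵥ P *ᵥ (u' - u)) - 2 * β ^ 2 * ((C *ᵥ (v' - v)) ⬝ᵥ r')
    ≤ γ⁻¹ * (μ ⬝ᵥ μ) + β * (u ⬝ᵥ P *ᵥ u)
      + β ^ 2 * ((C *ᵥ v) ⬝ᵥ (C *ᵥ v) + v ⬝ᵥ Q *ᵥ v) := by
  have hBu : B *ᵥ u' = r' - C *ᵥ v' := by rw [← hr]; abel
  have e1 : μ' ⬝ᵥ μ' = μ ⬝ᵥ μ + 2 * (γ * β) * (μ ⬝ᵥ r') + (γ * β) ^ 2 * (r' ⬝ᵥ r') := by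
    rw [hμ, dot_add_self]
    simp only [smul_dotProduct, dotProduct_smul, smul_eq_mul]; ring
  have e2 := quad_sub hP u' u
  have e3 := quad_sub hQ v' v
  have e4 := dot_sub_self (C *ᵥ v') (C *ᵥ v)
  have e5 := dotProduct_comm (C *ᵥ v) (C *ᵥ v')
  have e6 := dotProduct_comm r' (C *ᵥ v')
  have e8 := dotProduct_comm (P *ᵥ (u' - u)) u'
  have e9 := dotProduct_comm (Q *ᵥ (v' - v)) v'
  simp only [neg_dotProduct, add_dotProduct, smul_dotProduct, transpose_dot, hBu, smul_eq_mul,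
    e8] at hF
  simp only [neg_dotProduct, add_dotProduct, smul_dotProduct, transpose_dot, smul_eq_mul, e9] at hG
  rw [e2, e3]
  simp only [mulVec_sub] at hF hG ⊢
  rw [e4]
  simp only [sub_dotProduct, dotProduct_sub, e5, e6] at hF hG ⊢
  have e10 : γ⁻¹ * (μ' ⬝ᵥ μ')
      = γ⁻¹ * (μ ⬝ᵥ μ) + 2 * β * (μ ⬝ᵥ r') + γ * β ^ 2 * (r' ⬝ᵥ r') := by
    rw [e1]; field_simp
  rw [e10]
  have h := mul_le_mul_of_nonneg_left (add_le_add hF hG) (by positivity : (0 : ℝ) ≤ 2 * β)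
  linarith

/-- Comparison of the optimality conditions of two consecutive `z`-steps: it trades the unsigned
term of `descent_basic` for quantities that telescope. -/
lemma cross_term {m n₂ : ℕ} (C : Matrix (Fin m) (Fin n₂) ℝ)
    {Q : Matrix (Fin n₂) (Fin n₂) ℝ} (hQ : Q.PosSemidef) {β β' γ σ κ : ℝ} (hβ' : 0 < β')
    (hσ : 0 < σ) (hκ : 0 < κ) {d d' : Fin n₂ → ℝ} {l l' r r' : Fin m → ℝ}
    (hl : l' = l + (γ * β) • r)
    (hG : σ * (d' ⬝ᵥ d') ≤ (-(Cᵀ *ᵥ l' + β' • (Cᵀ *ᵥ r') + β' • (Q *ᵥ d'))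
      - -(Cᵀ *ᵥ l + β • (Cᵀ *ᵥ r) + β • (Q *ᵥ d))) ⬝ᵥ d') :
    β' ^ 2 * (d' ⬝ᵥ Q *ᵥ d') - β ^ 2 * (d ⬝ᵥ Q *ᵥ d) - κ * (β ^ 2 * (r ⬝ᵥ r))
      - (γ - 1) ^ 2 / κ * (β' ^ 2 * ((C *ᵥ d') ⬝ᵥ (C *ᵥ d')))
    ≤ - 2 * β' ^ 2 * ((C *ᵥ d') ⬝ᵥ r') := by
  have y1 := quad_young hQ β β' d d'
  have y2 := dot_young ((γ - 1) / κ * β') (-β) (C *ᵥ d') r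
  have y3 := mul_le_mul_of_nonneg_left y2 hκ.le
  have y4 : κ * (2 * ((γ - 1) / κ * β' * -β * ((C *ᵥ d') ⬝ᵥ r)))
      = - 2 * (γ - 1) * β' * β * ((C *ᵥ d') ⬝ᵥ r) := by field_simp
  have y5 : κ * (((γ - 1) / κ * β') ^ 2 * ((C *ᵥ d') ⬝ᵥ (C *ᵥ d')) + (-β) ^ 2 * (r ⬝ᵥ r))
      = (γ - 1) ^ 2 / κ * (β' ^ 2 * ((C *ᵥ d') ⬝ᵥ (C *ᵥ d'))) + κ * (β ^ 2 * (r ⬝ᵥ r)) := by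
    field_simp
  rw [y4, y5] at y3
  rw [hl] at hG
  simp only [sub_dotProduct, neg_dotProduct, add_dotProduct, smul_dotProduct, transpose_dot,
    smul_eq_mul] at hG
  rw [dotProduct_comm r, dotProduct_comm r', dotProduct_comm (Q *ᵥ d') d',
    dotProduct_comm (Q *ᵥ d) d', quad_symm hQ d' d] at hG
  have h0 : 0 ≤ σ * (d' ⬝ᵥ d') := mul_nonneg hσ.le (dot_self_nonneg d')
  have h := mul_le_mul_of_nonneg_left (h0.trans hG) (by positivity : (0 : ℝ) ≤ 2 * β')
  linarith

/-! ### The Lyapunov function -/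

/-- `(ys, zs, ls)` is a KKT solution of `min f(y) + g(z)` subject to `B y + C z = b`. -/
def IsKKT {m n₁ n₂ : ℕ} (B : Matrix (Fin m) (Fin n₁) ℝ) (C : Matrix (Fin m) (Fin n₂) ℝ)
    (b : Fin m → ℝ) (f : (Fin n₁ → ℝ) → ℝ) (g : (Fin n₂ → ℝ) → ℝ)
    (ys : Fin n₁ → ℝ) (zs : Fin n₂ → ℝ) (ls : Fin m → ℝ) : Prop :=
  IsSubgradient f (-(Bᵀ *ᵥ ls)) ys ∧ IsSubgradient g (-(Cᵀ *ᵥ ls)) zs ∧ B *ᵥ ys + C *ᵥ zs = b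

/-- The standing assumptions on the method, indexed from `0`. The constant `L` is any positive
number with `CᵀC + Q ⪯ L`, and the bound on `β (k + 1)` is stated without the square root. -/
structure IsIADMM {m n₁ n₂ : ℕ} (B : Matrix (Fin m) (Fin n₁) ℝ) (C : Matrix (Fin m) (Fin n₂) ℝ)
    (b : Fin m → ℝ) (f : (Fin n₁ → ℝ) → ℝ) (g : (Fin n₂ → ℝ) → ℝ) (γ ε βlow σ L : ℝ)
    (Q : Matrix (Fin n₂) (Fin n₂) ℝ) (β : ℕ → ℝ) (P : ℕ → Matrix (Fin n₁) (Fin n₁) ℝ)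
    (y : ℕ → Fin n₁ → ℝ) (z : ℕ → Fin n₂ → ℝ) (lam : ℕ → Fin m → ℝ) : Prop where
  γ_gt : 1 < γ
  γ_sq : γ ^ 2 < 1 + γ
  ε_pos : 0 < ε
  ε_lt : ε < 1
  βlow_pos : 0 < βlow
  σ_pos : 0 < σ
  L_pos : 0 < L
  g_strong : ∀ u ξ, IsSubgradient g ξ u → ∀ w,
    g w ≥ g u + ξ ⬝ᵥ (w - u) + σ / 2 * ((w - u) ⬝ᵥ (w - u))
  Q_psd : Q.PosSemidef
  L_bound : ∀ w, (C *ᵥ w) ⬝ᵥ (C *ᵥ w) + w ⬝ᵥ Q *ᵥ w ≤ L * (w ⬝ᵥ w)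
  β_low : ∀ k, βlow ≤ β k
  β_growth : ∀ k, β (k + 1) ^ 2 ≤ β k ^ 2 + (1 - ε) * σ * β k / L
  P_psd : ∀ k, (P k).PosSemidef
  P_mono : ∀ k, (β k • P k - β (k + 1) • P (k + 1)).PosSemidef
  y_step : ∀ k, IsSubgradient f
    (-(Bᵀ *ᵥ lam k + β k • (Bᵀ *ᵥ (B *ᵥ y (k + 1) + C *ᵥ z k - b))
      + P k *ᵥ (y (k + 1) - y k))) (y (k + 1))
  z_step : ∀ k, IsSubgradient g
    (-(Cᵀ *ᵥ lam k + β k • (Cᵀ *ᵥ (B *ᵥ y (k + 1) + C *ᵥ z (k + 1) - b))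
      + β k • (Q *ᵥ (z (k + 1) - z k)))) (z (k + 1))
  lam_step : ∀ k,
    lam (k + 1) = lam k + (γ * β k) • (B *ᵥ y (k + 1) + C *ᵥ z (k + 1) - b)

/-- The weight of the residual in the Lyapunov function: the midpoint of `(γ - 1)²` and `2 - γ`.
These are in this order exactly when `1 + γ - γ² > 0`. -/
noncomputable def kap (γ : ℝ) : ℝ := ((γ - 1) ^ 2 + (2 - γ)) / 2

/-- The Lyapunov function of the method relative to `(ys, zs, ls)`, at the iterate `k + 1`. -/
noncomputable def lyap {m n₁ n₂ : ℕ} (B : Matrix (Fin m) (Fin n₁) ℝ)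
    (C : Matrix (Fin m) (Fin n₂) ℝ) (b : Fin m → ℝ) (γ : ℝ) (Q : Matrix (Fin n₂) (Fin n₂) ℝ)
    (β : ℕ → ℝ) (P : ℕ → Matrix (Fin n₁) (Fin n₁) ℝ)
    (y : ℕ → Fin n₁ → ℝ) (z : ℕ → Fin n₂ → ℝ) (lam : ℕ → Fin m → ℝ)
    (ys : Fin n₁ → ℝ) (zs : Fin n₂ → ℝ) (ls : Fin m → ℝ) (k : ℕ) : ℝ :=
  γ⁻¹ * ((lam (k + 1) - ls) ⬝ᵥ (lam (k + 1) - ls))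
    + β (k + 1) * ((y (k + 1) - ys) ⬝ᵥ P (k + 1) *ᵥ (y (k + 1) - ys))
    + β (k + 1) ^ 2 * ((C *ᵥ (z (k + 1) - zs)) ⬝ᵥ (C *ᵥ (z (k + 1) - zs))
        + (z (k + 1) - zs) ⬝ᵥ Q *ᵥ (z (k + 1) - zs))
    + kap γ * (β k ^ 2 * ((B *ᵥ y (k + 1) + C *ᵥ z (k + 1) - b)
        ⬝ᵥ (B *ᵥ y (k + 1) + C *ᵥ z (k + 1) - b)))
    + β k ^ 2 * ((z (k + 1) - z k) ⬝ᵥ Q *ᵥ (z (k + 1) - z k))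

/-- A lower bound for the decrease of `lyap` produced by the step from `k` to `k + 1`. -/
noncomputable def dissip {m n₁ n₂ : ℕ} (B : Matrix (Fin m) (Fin n₁) ℝ)
    (C : Matrix (Fin m) (Fin n₂) ℝ) (b : Fin m → ℝ) (γ σ : ℝ) (Q : Matrix (Fin n₂) (Fin n₂) ℝ)
    (β : ℕ → ℝ) (P : ℕ → Matrix (Fin n₁) (Fin n₁) ℝ)
    (y : ℕ → Fin n₁ → ℝ) (z : ℕ → Fin n₂ → ℝ) (zs : Fin n₂ → ℝ) (k : ℕ) : ℝ :=
  σ * (β k * ((z (k + 1) - zs) ⬝ᵥ (z (k + 1) - zs)))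
    + (2 - γ - kap γ) * (β k ^ 2 * ((B *ᵥ y (k + 1) + C *ᵥ z (k + 1) - b)
        ⬝ᵥ (B *ᵥ y (k + 1) + C *ᵥ z (k + 1) - b)))
    + (1 - (γ - 1) ^ 2 / kap γ)
        * (β k ^ 2 * ((C *ᵥ (z (k + 1) - z k)) ⬝ᵥ (C *ᵥ (z (k + 1) - z k))))
    + β k ^ 2 * ((z (k + 1) - z k) ⬝ᵥ Q *ᵥ (z (k + 1) - z k))
    + β k * ((y (k + 1) - y k) ⬝ᵥ P k *ᵥ (y (k + 1) - y k))

namespace IsIADMM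

variable {m n₁ n₂ : ℕ} {B : Matrix (Fin m) (Fin n₁) ℝ} {C : Matrix (Fin m) (Fin n₂) ℝ}
    {b : Fin m → ℝ} {f : (Fin n₁ → ℝ) → ℝ} {g : (Fin n₂ → ℝ) → ℝ} {γ ε βlow σ L : ℝ}
    {Q : Matrix (Fin n₂) (Fin n₂) ℝ} {β : ℕ → ℝ} {P : ℕ → Matrix (Fin n₁) (Fin n₁) ℝ}
    {y : ℕ → Fin n₁ → ℝ} {z : ℕ → Fin n₂ → ℝ} {lam : ℕ → Fin m → ℝ}
    {ys : Fin n₁ → ℝ} {zs : Fin n₂ → ℝ} {ls : Fin m → ℝ}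

lemma β_pos (h : IsIADMM B C b f g γ ε βlow σ L Q β P y z lam) (k : ℕ) : 0 < β k :=
  h.βlow_pos.trans_le (h.β_low k)

lemma kap_bounds (h : IsIADMM B C b f g γ ε βlow σ L Q β P y z lam) :
    0 < kap γ ∧ 0 < 2 - γ - kap γ ∧ 0 < 1 - (γ - 1) ^ 2 / kap γ := by
  have h1 := h.γ_gt
  have h2 := h.γ_sq
  have h3 : 0 < kap γ := by unfold kap; nlinarith
  refine ⟨h3, by unfold kap; nlinarith, ?_⟩
  rw [sub_pos, div_lt_one h3]
  unfold kap; nlinarith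

lemma P_quad_le (h : IsIADMM B C b f g γ ε βlow σ L Q β P y z lam) (k : ℕ) (w : Fin n₁ → ℝ) :
    β (k + 1) * (w ⬝ᵥ P (k + 1) *ᵥ w) ≤ β k * (w ⬝ᵥ P k *ᵥ w) := by
  have := quad_nonneg (h.P_mono k) w
  simp only [sub_mulVec, smul_mulVec, dotProduct_sub, dotProduct_smul, smul_eq_mul] at this
  linarith

lemma P_quad_le_zero (h : IsIADMM B C b f g γ ε βlow σ L Q β P y z lam) (k : ℕ)
    (w : Fin n₁ → ℝ) : β k * (w ⬝ᵥ P k *ᵥ w) ≤ β 0 * (w ⬝ᵥ P 0 *ᵥ w) := by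
  induction k with
  | zero => exact le_rfl
  | succ k ih => exact (h.P_quad_le k w).trans ih

/-- The growth condition on `β` is designed so that strong convexity pays for the increase of the
weight of the `z`-error. -/
lemma z_weight (h : IsIADMM B C b f g γ ε βlow σ L Q β P y z lam) (k : ℕ) (w : Fin n₂ → ℝ) :
    β (k + 1) ^ 2 * ((C *ᵥ w) ⬝ᵥ (C *ᵥ w) + w ⬝ᵥ Q *ᵥ w)
      ≤ β k ^ 2 * ((C *ᵥ w) ⬝ᵥ (C *ᵥ w) + w ⬝ᵥ Q *ᵥ w) + σ * (β k * (w ⬝ᵥ w)) := by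
  set N := (C *ᵥ w) ⬝ᵥ (C *ᵥ w) + w ⬝ᵥ Q *ᵥ w with hN
  have hN0 : 0 ≤ N := add_nonneg (dot_self_nonneg _) (quad_nonneg h.Q_psd w)
  have h1 := mul_le_mul_of_nonneg_right (h.β_growth k) hN0
  have hβ := h.β_pos k
  have hc : 0 ≤ (1 - ε) * σ * β k / L :=
    div_nonneg (mul_nonneg (mul_nonneg (by linarith [h.ε_lt]) h.σ_pos.le) hβ.le) h.L_pos.le
  have h2 := mul_le_mul_of_nonneg_left (h.L_bound w) hc
  rw [← hN] at h2
  have h3 : (1 - ε) * σ * β k / L * (L * (w ⬝ᵥ w)) = (1 - ε) * (σ * (β k * (w ⬝ᵥ w))) := by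
    have := h.L_pos.ne'
    field_simp
  have h4 : 0 ≤ ε * (σ * (β k * (w ⬝ᵥ w))) :=
    mul_nonneg h.ε_pos.le (mul_nonneg h.σ_pos.le (mul_nonneg hβ.le (dot_self_nonneg w)))
  linarith

/-- Fundamental descent inequality, valid relative to every KKT point. -/
lemma lyap_step (h : IsIADMM B C b f g γ ε βlow σ L Q β P y z lam)
    (hK : IsKKT B C b f g ys zs ls) (k : ℕ) :
    lyap B C b γ Q β P y z lam ys zs ls (k + 1) + dissip B C b γ σ Q β P y z zs (k + 1)
      ≤ lyap B C b γ Q β P y z lam ys zs ls k := by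
  obtain ⟨hf, hg, hb⟩ := hK
  obtain ⟨hκ, -, -⟩ := h.kap_bounds
  have hr : B *ᵥ (y (k + 2) - ys) + C *ᵥ (z (k + 2) - zs)
      = B *ᵥ y (k + 2) + C *ᵥ z (k + 2) - b := by
    simp only [mulVec_sub, ← hb]; abel
  have hz : z (k + 2) - z (k + 1) = (z (k + 2) - zs) - (z (k + 1) - zs) := by abel
  have hy : y (k + 2) - y (k + 1) = (y (k + 2) - ys) - (y (k + 1) - ys) := by abel
  have hF := subgradient_monotone (σ := 0)
    (fun u ξ hξ w => by have := hξ w; linarith) (h.y_step (k + 1)) hf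
  have hG := subgradient_monotone h.g_strong (h.z_step (k + 1)) hg
  have hG2 := subgradient_monotone h.g_strong (h.z_step (k + 1)) (h.z_step k)
  have hl := h.lam_step (k + 1)
  rw [zero_mul] at hF
  have eF : B *ᵥ y (k + 1 + 1) + C *ᵥ z (k + 1) - b
      = (B *ᵥ y (k + 2) + C *ᵥ z (k + 2) - b) - C *ᵥ ((z (k + 2) - zs) - (z (k + 1) - zs)) := by
    simp only [mulVec_sub]; abel
  have eF2 : ∀ a c : Fin n₁ → ℝ, -(Bᵀ *ᵥ lam (k + 1) + a + c) - -(Bᵀ *ᵥ ls)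
      = -(Bᵀ *ᵥ (lam (k + 1) - ls) + a + c) := fun a c => by rw [mulVec_sub]; abel
  have eG2 : ∀ a c : Fin n₂ → ℝ, -(Cᵀ *ᵥ lam (k + 1) + a + c) - -(Cᵀ *ᵥ ls)
      = -(Cᵀ *ᵥ (lam (k + 1) - ls) + a + c) := fun a c => by rw [mulVec_sub]; abel
  rw [eF, eF2, hy] at hF
  rw [eG2, hz] at hG
  have hμ : lam (k + 2) - ls = (lam (k + 1) - ls)
      + (γ * β (k + 1)) • (B *ᵥ y (k + 2) + C *ᵥ z (k + 2) - b) := by rw [hl]; abel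
  have d := descent_basic B C h.Q_psd (h.P_psd (k + 1)) (h.β_pos (k + 1))
    (zero_lt_one.trans h.γ_gt) hr hμ hF hG
  rw [← hz, ← hy] at d
  have c := cross_term C h.Q_psd (h.β_pos (k + 1)) h.σ_pos hκ (h.lam_step k) hG2
  have p := h.P_quad_le (k + 1) (y (k + 2) - ys)
  have w := h.z_weight (k + 1) (z (k + 2) - zs)
  unfold lyap dissip
  simp only [add_assoc, Nat.reduceAdd] at *
  linarith

end IsIADMM

/-! ### Limits and subsequences -/

lemma norm_sq_le_dot {n : ℕ} (w : Fin n → ℝ) : ‖w‖ ^ 2 ≤ w ⬝ᵥ w := by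
  have h0 := dot_self_nonneg w
  have h : ‖w‖ ≤ Real.sqrt (w ⬝ᵥ w) := by
    refine (pi_norm_le_iff_of_nonneg (Real.sqrt_nonneg _)).2 fun i => ?_
    rw [Real.norm_eq_abs]
    refine Real.abs_le_sqrt ?_
    have := Finset.single_le_sum (f := fun i => w i * w i) (fun i _ => mul_self_nonneg (w i))
      (Finset.mem_univ i)
    rw [sq]; exact this
  calc ‖w‖ ^ 2 ≤ Real.sqrt (w ⬝ᵥ w) ^ 2 := pow_le_pow_left₀ (norm_nonneg _) h 2
    _ = w ⬝ᵥ w := Real.sq_sqrt h0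

lemma tendsto_zero_of_dot {α : Type*} {F : Filter α} {n : ℕ} {x : α → Fin n → ℝ}
    (h : Tendsto (fun a => x a ⬝ᵥ x a) F (nhds 0)) : Tendsto x F (nhds 0) := by
  rw [tendsto_zero_iff_norm_tendsto_zero]
  have h2 : Tendsto (fun a => ‖x a‖ ^ 2) F (nhds 0) :=
    squeeze_zero (fun a => sq_nonneg _) (fun a => norm_sq_le_dot _) h
  have h3 := h2.sqrt
  simpa [Real.sqrt_sq (norm_nonneg _)] using h3

lemma tendsto_dot_zero {α : Type*} {F : Filter α} {n : ℕ} {x : α → Fin n → ℝ}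
    (h : Tendsto x F (nhds 0)) (A : Matrix (Fin n) (Fin n) ℝ) :
    Tendsto (fun a => x a ⬝ᵥ A *ᵥ x a) F (nhds 0) := by
  have hc : Continuous fun w : Fin n → ℝ => w ⬝ᵥ A *ᵥ w := by fun_prop
  simpa [Function.comp_def] using (hc.tendsto 0).comp h

lemma tendsto_mulVec {α : Type*} {F : Filter α} {p q : ℕ} {x : α → Fin q → ℝ} {x₀ : Fin q → ℝ}
    (h : Tendsto x F (nhds x₀)) (A : Matrix (Fin p) (Fin q) ℝ) :
    Tendsto (fun a => A *ᵥ x a) F (nhds (A *ᵥ x₀)) := by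
  have hc : Continuous fun w : Fin q → ℝ => A *ᵥ w := by fun_prop
  exact (hc.tendsto x₀).comp h

lemma tendsto_const_mul_zero {α : Type*} {F : Filter α} {a : α → ℝ} (c : ℝ)
    (h : Tendsto a F (nhds 0)) : Tendsto (fun x => c * a x) F (nhds 0) := by
  simpa using h.const_mul c

/-- The graph of the subdifferential of a continuous function is closed. -/
lemma subgradient_closed {p : ℕ} {h : (Fin p → ℝ) → ℝ} (hc : Continuous h)
    {ξ u : ℕ → Fin p → ℝ} {ξ₀ u₀ : Fin p → ℝ} (hs : ∀ n, IsSubgradient h (ξ n) (u n))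
    (hξ : Tendsto ξ atTop (nhds ξ₀)) (hu : Tendsto u atTop (nhds u₀)) :
    IsSubgradient h ξ₀ u₀ := by
  intro w
  have hd : Continuous fun q : (Fin p → ℝ) × (Fin p → ℝ) => h q.2 + q.1 ⬝ᵥ (w - q.2) := by
    fun_prop
  have ht := (hd.tendsto (ξ₀, u₀)).comp (hξ.prodMk_nhds hu)
  exact le_of_tendsto' ht fun n => hs n w

lemma descent_summable {E D : ℕ → ℝ} (hE : ∀ k, 0 ≤ E k) (hD : ∀ k, 0 ≤ D k)
    (h : ∀ k, E (k + 1) + D k ≤ E k) : Antitone E ∧ Summable D := by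
  refine ⟨antitone_nat_of_succ_le fun k => by linarith [h k, hD k],
    summable_of_sum_range_le (c := E 0) hD fun n => ?_⟩
  have : ∀ n, E n + ∑ i ∈ Finset.range n, D i ≤ E 0 := by
    intro n
    induction n with
    | zero => simp
    | succ n ih => rw [Finset.sum_range_succ]; linarith [h n]
  linarith [this n, hE n]

/-- Since `∑ 1 / (k + 1)` diverges, a summable sequence stays small on a subsequence even after
multiplication by weights that grow at most linearly. -/
lemma exists_subseq_weighted {w s : ℕ → ℝ} {K : ℝ} (hK : 0 < K) (hw0 : ∀ k, 0 < w k)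
    (hw : ∀ k, w k ≤ K * (k + 1)) (hs0 : ∀ k, 0 ≤ s k) (hs : Summable s) :
    ∃ φ : ℕ → ℕ, StrictMono φ ∧ Tendsto (fun n => w (φ n) * s (φ n)) atTop (nhds 0) := by
  -- otherwise `s k ≥ const / (k + 1)` eventually, contradicting summability
  have hfreq : ∀ n : ℕ, ∃ᶠ k in atTop, w k * s k < 1 / ((n : ℝ) + 1) := by
    intro n hev
    simp only [not_lt] at hev
    have hn : (0 : ℝ) < 1 / ((n : ℝ) + 1) := by positivity
    have hsum : Summable fun k : ℕ => 1 / ((n : ℝ) + 1) / K * (1 / ((k : ℝ) + 1)) := by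
      refine Summable.of_norm_bounded_eventually_nat hs ?_
      filter_upwards [hev] with k hk
      have hk1 : (0 : ℝ) < (k : ℝ) + 1 := by positivity
      rw [Real.norm_of_nonneg (by positivity)]
      have h1 : 1 / ((n : ℝ) + 1) ≤ K * (k + 1) * s k :=
        hk.trans (mul_le_mul_of_nonneg_right (hw k) (hs0 k))
      rw [div_mul_div_comm, mul_one, div_le_iff₀ (by positivity)]
      linarith
    have hne : 1 / ((n : ℝ) + 1) / K ≠ 0 := by positivity
    have h2 := (summable_mul_left_iff hne).1 hsum
    refine Real.not_summable_one_div_natCast ((summable_nat_add_iff 1).1 ?_)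
    simpa using h2
  obtain ⟨φ, hφ, h⟩ := extraction_forall_of_frequently hfreq
  exact ⟨φ, hφ, squeeze_zero (fun n => mul_nonneg (hw0 _).le (hs0 _)) (fun n => (h n).le)
    tendsto_one_div_add_atTop_nhds_zero_nat⟩

/-! ### Consequences of the descent inequality -/

namespace IsIADMM

variable {m n₁ n₂ : ℕ} {B : Matrix (Fin m) (Fin n₁) ℝ} {C : Matrix (Fin m) (Fin n₂) ℝ}
    {b : Fin m → ℝ} {f : (Fin n₁ → ℝ) → ℝ} {g : (Fin n₂ → ℝ) → ℝ} {γ ε βlow σ L : ℝ}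
    {Q : Matrix (Fin n₂) (Fin n₂) ℝ} {β : ℕ → ℝ} {P : ℕ → Matrix (Fin n₁) (Fin n₁) ℝ}
    {y : ℕ → Fin n₁ → ℝ} {z : ℕ → Fin n₂ → ℝ} {lam : ℕ → Fin m → ℝ}
    {ys : Fin n₁ → ℝ} {zs : Fin n₂ → ℝ} {ls : Fin m → ℝ}

/-- Consecutive penalty parameters are comparable, because `β` is bounded below. -/
lemma β_succ_sq_le (h : IsIADMM B C b f g γ ε βlow σ L Q β P y z lam) (k : ℕ) :
    β (k + 1) ^ 2 ≤ (1 + (1 - ε) * σ / L / βlow) * β k ^ 2 := by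
  have hc : 0 ≤ (1 - ε) * σ / L :=
    div_nonneg (mul_nonneg (by linarith [h.ε_lt]) h.σ_pos.le) h.L_pos.le
  have h1 := h.β_growth k
  have hb := h.βlow_pos
  have h2 : (1 - ε) * σ * β k / L ≤ (1 - ε) * σ / L / βlow * β k ^ 2 := by
    have e : (1 - ε) * σ * β k / L = (1 - ε) * σ / L / βlow * (βlow * β k) := by field_simp
    rw [e, sq]
    exact mul_le_mul_of_nonneg_left (mul_le_mul_of_nonneg_right (h.β_low k) (h.β_pos k).le)
      (div_nonneg hc hb.le)
  linarith

lemma β_linear (h : IsIADMM B C b f g γ ε βlow σ L Q β P y z lam) (k : ℕ) :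
    β k ≤ (β 0 + (1 - ε) * σ / L) * (k + 1) := by
  set c := (1 - ε) * σ / L with hcdef
  have hc : 0 ≤ c :=
    div_nonneg (mul_nonneg (by linarith [h.ε_lt]) h.σ_pos.le) h.L_pos.le
  induction k with
  | zero => simp; exact hc
  | succ k ih =>
    have hk := h.β_pos k
    have h1 : β (k + 1) ≤ β k + c := by
      refine le_of_sq_le_sq ?_ (by linarith)
      have e : (1 - ε) * σ * β k / L = c * β k := by rw [hcdef]; ring
      have := h.β_growth k
      nlinarith [mul_nonneg hc hk.le]
    have := h.β_pos 0
    push_cast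
    linarith

lemma dissip_nonneg_parts (h : IsIADMM B C b f g γ ε βlow σ L Q β P y z lam) (k : ℕ) :
    0 ≤ β k * ((z (k + 1) - zs) ⬝ᵥ (z (k + 1) - zs)) ∧
    0 ≤ β k ^ 2 * ((B *ᵥ y (k + 1) + C *ᵥ z (k + 1) - b)
        ⬝ᵥ (B *ᵥ y (k + 1) + C *ᵥ z (k + 1) - b)) ∧
    0 ≤ β k ^ 2 * ((C *ᵥ (z (k + 1) - z k)) ⬝ᵥ (C *ᵥ (z (k + 1) - z k))) ∧
    0 ≤ β k ^ 2 * ((z (k + 1) - z k) ⬝ᵥ Q *ᵥ (z (k + 1) - z k)) ∧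
    0 ≤ β k * ((y (k + 1) - y k) ⬝ᵥ P k *ᵥ (y (k + 1) - y k)) := by
  have hβ := h.β_pos k
  exact ⟨mul_nonneg hβ.le (dot_self_nonneg _), mul_nonneg (sq_nonneg _) (dot_self_nonneg _),
    mul_nonneg (sq_nonneg _) (dot_self_nonneg _), mul_nonneg (sq_nonneg _) (quad_nonneg h.Q_psd _),
    mul_nonneg hβ.le (quad_nonneg (h.P_psd k) _)⟩

lemma lyap_nonneg_parts (h : IsIADMM B C b f g γ ε βlow σ L Q β P y z lam) (k : ℕ) :
    0 ≤ γ⁻¹ * ((lam (k + 1) - ls) ⬝ᵥ (lam (k + 1) - ls)) ∧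
    0 ≤ β (k + 1) * ((y (k + 1) - ys) ⬝ᵥ P (k + 1) *ᵥ (y (k + 1) - ys)) ∧
    0 ≤ β (k + 1) ^ 2 * ((C *ᵥ (z (k + 1) - zs)) ⬝ᵥ (C *ᵥ (z (k + 1) - zs))) ∧
    0 ≤ β (k + 1) ^ 2 * ((z (k + 1) - zs) ⬝ᵥ Q *ᵥ (z (k + 1) - zs)) :=
  ⟨mul_nonneg (inv_nonneg.2 (by linarith [h.γ_gt])) (dot_self_nonneg _),
    mul_nonneg (h.β_pos _).le (quad_nonneg (h.P_psd _) _),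
    mul_nonneg (sq_nonneg _) (dot_self_nonneg _),
    mul_nonneg (sq_nonneg _) (quad_nonneg h.Q_psd _)⟩

lemma lyap_nonneg (h : IsIADMM B C b f g γ ε βlow σ L Q β P y z lam) (k : ℕ) :
    0 ≤ lyap B C b γ Q β P y z lam ys zs ls k := by
  obtain ⟨a1, a2, a3, a4⟩ := h.lyap_nonneg_parts (ys := ys) (zs := zs) (ls := ls) k
  obtain ⟨-, b2, -, b4, -⟩ := h.dissip_nonneg_parts (zs := zs) k
  have := mul_nonneg h.kap_bounds.1.le b2
  unfold lyap
  linarith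

lemma dissip_nonneg (h : IsIADMM B C b f g γ ε βlow σ L Q β P y z lam) (k : ℕ) :
    0 ≤ dissip B C b γ σ Q β P y z zs k := by
  obtain ⟨b1, b2, b3, b4, b5⟩ := h.dissip_nonneg_parts (zs := zs) k
  obtain ⟨-, c2, c3⟩ := h.kap_bounds
  have := mul_nonneg h.σ_pos.le b1
  have := mul_nonneg c2.le b2
  have := mul_nonneg c3.le b3
  unfold dissip
  linarith

lemma antitone_summable (h : IsIADMM B C b f g γ ε βlow σ L Q β P y z lam)
    (hK : IsKKT B C b f g ys zs ls) :
    Antitone (lyap B C b γ Q β P y z lam ys zs ls) ∧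
      Summable (dissip B C b γ σ Q β P y z zs) := by
  obtain ⟨h1, h2⟩ := descent_summable (E := lyap B C b γ Q β P y z lam ys zs ls)
    (D := fun k => dissip B C b γ σ Q β P y z zs (k + 1))
    (fun k => h.lyap_nonneg k) (fun k => h.dissip_nonneg _) (h.lyap_step hK)
  exact ⟨h1, (summable_nat_add_iff 1).1 h2⟩

/-- Consequences of the summability of the dissipation, term by term. -/
lemma parts_tendsto (h : IsIADMM B C b f g γ ε βlow σ L Q β P y z lam)
    (hK : IsKKT B C b f g ys zs ls) :
    Summable (fun k => β k * ((z (k + 1) - zs) ⬝ᵥ (z (k + 1) - zs))) ∧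
    Tendsto (fun k => β k ^ 2 * ((B *ᵥ y (k + 1) + C *ᵥ z (k + 1) - b)
        ⬝ᵥ (B *ᵥ y (k + 1) + C *ᵥ z (k + 1) - b))) atTop (nhds 0) ∧
    Tendsto (fun k => β k ^ 2 * ((C *ᵥ (z (k + 1) - z k)) ⬝ᵥ (C *ᵥ (z (k + 1) - z k))))
      atTop (nhds 0) ∧
    Tendsto (fun k => β k ^ 2 * ((z (k + 1) - z k) ⬝ᵥ Q *ᵥ (z (k + 1) - z k))) atTop (nhds 0) ∧
    Tendsto (fun k => β k * ((y (k + 1) - y k) ⬝ᵥ P k *ᵥ (y (k + 1) - y k)))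
      atTop (nhds 0) := by
  obtain ⟨-, hs⟩ := h.antitone_summable hK
  have ht := hs.tendsto_atTop_zero
  obtain ⟨-, c2, c3⟩ := h.kap_bounds
  have hσ := h.σ_pos
  have key : ∀ {a : ℕ → ℝ} {c : ℝ}, 0 < c → (∀ k, 0 ≤ a k) →
      (∀ k, c * a k ≤ dissip B C b γ σ Q β P y z zs k) → Summable a := by
    intro a c hc ha hle
    refine (hs.mul_left c⁻¹).of_nonneg_of_le ha fun k => ?_
    rw [inv_mul_eq_div, le_div_iff₀ hc]
    linarith [hle k]
  have parts := h.dissip_nonneg_parts (zs := zs)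
  have prods : ∀ k, _ ∧ _ ∧ _ := fun k => ⟨mul_nonneg hσ.le (parts k).1,
    mul_nonneg c2.le (parts k).2.1, mul_nonneg c3.le (parts k).2.2.1⟩
  refine ⟨key hσ (fun k => (parts k).1) fun k => ?_,
    (key c2 (fun k => (parts k).2.1) fun k => ?_).tendsto_atTop_zero,
    (key c3 (fun k => (parts k).2.2.1) fun k => ?_).tendsto_atTop_zero,
    (key one_pos (fun k => (parts k).2.2.2.1) fun k => ?_).tendsto_atTop_zero,
    (key one_pos (fun k => (parts k).2.2.2.2) fun k => ?_).tendsto_atTop_zero⟩ <;>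
  · obtain ⟨b1, b2, b3, b4, b5⟩ := parts k
    obtain ⟨p1, p2, p3⟩ := prods k
    unfold dissip
    linarith

lemma lam_error (h : IsIADMM B C b f g γ ε βlow σ L Q β P y z lam) (k : ℕ) :
    (lam (k + 1) - ls) ⬝ᵥ (lam (k + 1) - ls) ≤ γ * lyap B C b γ Q β P y z lam ys zs ls k := by
  obtain ⟨a1, a2, a3, a4⟩ := h.lyap_nonneg_parts (ys := ys) (zs := zs) (ls := ls) k
  obtain ⟨-, b2, -, b4, -⟩ := h.dissip_nonneg_parts (zs := zs) k
  have := mul_nonneg h.kap_bounds.1.le b2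
  have hγ : 0 < γ := zero_lt_one.trans h.γ_gt
  have h1 : γ⁻¹ * ((lam (k + 1) - ls) ⬝ᵥ (lam (k + 1) - ls))
      ≤ lyap B C b γ Q β P y z lam ys zs ls k := by
    unfold lyap
    linarith
  rwa [inv_mul_le_iff₀ hγ] at h1

/-- The Lyapunov function dominates the `y`-error, uniformly in the KKT point: `B (y - y*)` is
the residual minus `C (z - z*)`, and both are controlled with weight `β²`. -/
lemma y_error (h : IsIADMM B C b f g γ ε βlow σ L Q β P y z lam) {l : ℝ} (hl : 0 ≤ l)
    (hΘ : ∀ k w, w ⬝ᵥ w ≤ l * (β k * (w ⬝ᵥ P k *ᵥ w) + β k ^ 2 * ((B *ᵥ w) ⬝ᵥ (B *ᵥ w)))) :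
    ∃ K : ℝ, ∀ ys zs ls, B *ᵥ ys + C *ᵥ zs = b → ∀ k,
      (y (k + 1) - ys) ⬝ᵥ (y (k + 1) - ys) ≤ K * lyap B C b γ Q β P y z lam ys zs ls k := by
  set R := 1 + (1 - ε) * σ / L / βlow with hR
  have hR0 : 0 ≤ R := by
    have : 0 ≤ (1 - ε) * σ / L / βlow :=
      div_nonneg (div_nonneg (mul_nonneg (by linarith [h.ε_lt]) h.σ_pos.le) h.L_pos.le)
        h.βlow_pos.le
    linarith
  refine ⟨l * (3 + 2 * R / kap γ), fun ys zs ls hb k => ?_⟩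
  obtain ⟨a1, a2, a3, a4⟩ := h.lyap_nonneg_parts (ys := ys) (zs := zs) (ls := ls) k
  obtain ⟨-, b2, -, b4, -⟩ := h.dissip_nonneg_parts (zs := zs) k
  have hκ := h.kap_bounds.1
  have b2' := mul_nonneg hκ.le b2
  have hE : β (k + 1) * ((y (k + 1) - ys) ⬝ᵥ P (k + 1) *ᵥ (y (k + 1) - ys))
      + β (k + 1) ^ 2 * ((C *ᵥ (z (k + 1) - zs)) ⬝ᵥ (C *ᵥ (z (k + 1) - zs)))
      + kap γ * (β k ^ 2 * ((B *ᵥ y (k + 1) + C *ᵥ z (k + 1) - b)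
        ⬝ᵥ (B *ᵥ y (k + 1) + C *ᵥ z (k + 1) - b)))
      ≤ lyap B C b γ Q β P y z lam ys zs ls k := by
    unfold lyap
    linarith
  have hBu : B *ᵥ (y (k + 1) - ys)
      = (B *ᵥ y (k + 1) + C *ᵥ z (k + 1) - b) - C *ᵥ (z (k + 1) - zs) := by
    simp only [mulVec_sub, ← hb]; abel
  set E := lyap B C b γ Q β P y z lam ys zs ls k
  set r := B *ᵥ y (k + 1) + C *ᵥ z (k + 1) - b
  set c := C *ᵥ (z (k + 1) - zs)
  have h1 : (r - c) ⬝ᵥ (r - c) ≤ 2 * (r ⬝ᵥ r) + 2 * (c ⬝ᵥ c) := by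
    have e := dot_sub_self r c
    have y1 := dot_young (-1) 1 r c
    linarith
  have h2 := mul_le_mul_of_nonneg_left h1 (sq_nonneg (β (k + 1)))
  have h3 := mul_le_mul_of_nonneg_right (h.β_succ_sq_le k) (dot_self_nonneg r)
  rw [← hR] at h3
  have h4 : β k ^ 2 * (r ⬝ᵥ r) ≤ E / kap γ := by
    rw [le_div_iff₀ hκ]; linarith
  have h5 := mul_le_mul_of_nonneg_left h4 hR0
  have h6 := hΘ (k + 1) (y (k + 1) - ys)
  rw [hBu] at h6
  refine h6.trans ?_
  rw [mul_assoc]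
  refine mul_le_mul_of_nonneg_left ?_ hl
  have e : (3 + 2 * R / kap γ) * E = 3 * E + 2 * (R * (E / kap γ)) := by ring
  rw [e]
  linarith

end IsIADMM

/-! ### Identification of the limit -/

namespace IsIADMM

variable {m n₁ n₂ : ℕ} {B : Matrix (Fin m) (Fin n₁) ℝ} {C : Matrix (Fin m) (Fin n₂) ℝ}
    {b : Fin m → ℝ} {f : (Fin n₁ → ℝ) → ℝ} {g : (Fin n₂ → ℝ) → ℝ} {γ ε βlow σ L : ℝ}
    {Q : Matrix (Fin n₂) (Fin n₂) ℝ} {β : ℕ → ℝ} {P : ℕ → Matrix (Fin n₁) (Fin n₁) ℝ}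
    {y : ℕ → Fin n₁ → ℝ} {z : ℕ → Fin n₂ → ℝ} {lam : ℕ → Fin m → ℝ}
    {ys : Fin n₁ → ℝ} {zs : Fin n₂ → ℝ} {ls : Fin m → ℝ}

lemma tendsto_zero_of_smul {n : ℕ} {w : ℕ → Fin n → ℝ}
    (h : IsIADMM B C b f g γ ε βlow σ L Q β P y z lam)
    (hw : Tendsto (fun k => β k • w k) atTop (nhds 0)) : Tendsto w atTop (nhds 0) := by
  rw [tendsto_zero_iff_norm_tendsto_zero] at hw ⊢
  have h2 := hw.const_mul βlow⁻¹
  rw [mul_zero] at h2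
  refine squeeze_zero (fun _ => norm_nonneg _) (fun k => ?_) h2
  rw [inv_mul_eq_div, le_div_iff₀ h.βlow_pos, norm_smul, Real.norm_of_nonneg (h.β_pos k).le,
    mul_comm]
  exact mul_le_mul_of_nonneg_right (h.β_low k) (norm_nonneg _)

lemma smul_tendsto_of_sq {n : ℕ} {w : ℕ → Fin n → ℝ}
    (hw : Tendsto (fun k => β k ^ 2 * (w k ⬝ᵥ w k)) atTop (nhds 0)) :
    Tendsto (fun k => β k • w k) atTop (nhds 0) := by
  refine tendsto_zero_of_dot (hw.congr fun k => ?_)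
  simp only [smul_dotProduct, dotProduct_smul, smul_eq_mul]; ring

/-- Any limit point of the iterates is a KKT point: all
perturbation terms in the optimality conditions vanish asymptotically, even if `β` is unbounded. -/
lemma kkt_of_subseq (h : IsIADMM B C b f g γ ε βlow σ L Q β P y z lam)
    (hfc : Continuous f) (hgc : Continuous g) (hK : IsKKT B C b f g ys zs ls)
    {θ : ℕ → ℕ} (hθ : StrictMono θ) {yb : Fin n₁ → ℝ} {lb : Fin m → ℝ}
    (hz : Tendsto (fun k => z (k + 1)) atTop (nhds zs))
    (hy : Tendsto (fun n => y (θ n + 1)) atTop (nhds yb))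
    (hlam : Tendsto (fun n => lam (θ n + 1)) atTop (nhds lb)) :
    IsKKT B C b f g yb zs lb := by
  obtain ⟨-, t2, t3, t4, t5⟩ := h.parts_tendsto hK
  have hr := smul_tendsto_of_sq t2
  have hC := smul_tendsto_of_sq t3
  have hr0 := h.tendsto_zero_of_smul hr
  have hQ : Tendsto (fun k => β k • (Q *ᵥ (z (k + 1) - z k))) atTop (nhds 0) := by
    refine smul_tendsto_of_sq (squeeze_zero (fun k => mul_nonneg (sq_nonneg _)
      (dot_self_nonneg _)) (fun k => ?_) (tendsto_const_mul_zero (lamMax Q) t4))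
    have := mul_le_mul_of_nonneg_left
      (mulVec_sq_le h.Q_psd (lamMax_bound Q) (z (k + 1) - z k)) (sq_nonneg (β k))
    linarith
  have hP : Tendsto (fun k => P k *ᵥ (y (k + 1) - y k)) atTop (nhds 0) := by
    refine h.tendsto_zero_of_smul (smul_tendsto_of_sq (squeeze_zero
      (fun k => mul_nonneg (sq_nonneg _) (dot_self_nonneg _)) (fun k => ?_)
      (tendsto_const_mul_zero (lamMax (β 0 • P 0)) t5)))
    -- `β k • P k` is bounded by `β 0 • P 0`, hence has bounded largest eigenvalue
    have := mulVec_sq_le (A := β k • P k) (l := lamMax (β 0 • P 0))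
      ((h.P_psd k).smul (h.β_pos k).le) (fun w => by
        have h1 := lamMax_bound (β 0 • P 0) w
        have h2 := h.P_quad_le_zero k w
        simp only [smul_mulVec, dotProduct_smul, smul_eq_mul] at h1 ⊢
        linarith) (y (k + 1) - y k)
    simp only [smul_mulVec, dotProduct_smul, smul_dotProduct, smul_eq_mul] at this
    linarith
  have hl0 : Tendsto (fun k => lam k - lam (k + 1)) atTop (nhds 0) := by
    have h1 := hr.const_smul (-γ)
    rw [smul_zero] at h1
    refine h1.congr fun k => ?_
    rw [h.lam_step k, smul_smul, neg_mul, neg_smul]; abel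
  have hθt := hθ.tendsto_atTop
  have hlam' : Tendsto (fun n => lam (θ n)) atTop (nhds lb) := by
    have h1 := (hl0.comp hθt).add hlam
    rw [zero_add] at h1
    exact h1.congr fun n => by simp
  refine ⟨subgradient_closed hfc (fun n => h.y_step (θ n)) ?_ hy,
    subgradient_closed hgc (fun n => h.z_step (θ n)) ?_ (hz.comp hθt), ?_⟩
  · have h1 := ((tendsto_mulVec hlam' Bᵀ).add (tendsto_mulVec ((hr.sub hC).comp hθt) Bᵀ)).add
      (hP.comp hθt)
    simp only [sub_zero, mulVec_zero, add_zero] at h1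
    refine h1.neg.congr fun n => ?_
    have e : B *ᵥ y (θ n + 1) + C *ᵥ z (θ n) - b
        = (B *ᵥ y (θ n + 1) + C *ᵥ z (θ n + 1) - b) - C *ᵥ (z (θ n + 1) - z (θ n)) := by
      rw [mulVec_sub C]; abel
    simp only [Function.comp, ← smul_sub, mulVec_smul, e]
  · have h1 := ((tendsto_mulVec hlam' Cᵀ).add (tendsto_mulVec (hr.comp hθt) Cᵀ)).add
      (hQ.comp hθt)
    simp only [mulVec_zero, add_zero] at h1
    refine h1.neg.congr fun n => ?_
    simp only [Function.comp, mulVec_smul]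
  · have h1 := ((tendsto_mulVec hy B).add (tendsto_mulVec (hz.comp hθt) C)).sub_const b
    exact sub_eq_zero.1 (tendsto_nhds_unique h1 (hr0.comp hθt))

/-- Along a subsequence on which `y`, `lam` and the weighted `z`-error converge, the Lyapunov
function relative to the limit tends to zero. -/
lemma lyap_subseq (h : IsIADMM B C b f g γ ε βlow σ L Q β P y z lam)
    (hK : IsKKT B C b f g ys zs ls) {θ : ℕ → ℕ} (hθ : StrictMono θ)
    (hy : Tendsto (fun n => y (θ n + 1)) atTop (nhds ys))
    (hlam : Tendsto (fun n => lam (θ n + 1)) atTop (nhds ls))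
    (hw : Tendsto (fun n => β (θ n) * (β (θ n) * ((z (θ n + 1) - zs) ⬝ᵥ (z (θ n + 1) - zs))))
      atTop (nhds 0)) :
    Tendsto (fun n => lyap B C b γ Q β P y z lam ys zs ls (θ n)) atTop (nhds 0) := by
  obtain ⟨t1, t2, -, t4, -⟩ := h.parts_tendsto hK
  have hθt := hθ.tendsto_atTop
  have s1 := t1.tendsto_atTop_zero.comp hθt
  have s2 := t2.comp hθt
  have s4 := t4.comp hθt
  have hy0 : Tendsto (fun n => y (θ n + 1) - ys) atTop (nhds 0) := by
    simpa using hy.sub_const ys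
  have hl0 : Tendsto (fun n => lam (θ n + 1) - ls) atTop (nhds 0) := by
    simpa using hlam.sub_const ls
  have a1 := (tendsto_dot_zero hl0 1).const_mul γ⁻¹
  have a2 := (tendsto_dot_zero hy0 (P 0)).const_mul (β 0)
  have a3 := (hw.const_mul L).add (s1.const_mul σ)
  have tot := (((a1.add a2).add a3).add (s2.const_mul (kap γ))).add s4
  simp only [mul_zero, add_zero] at tot
  refine squeeze_zero (fun n => h.lyap_nonneg _) (fun n => ?_) tot
  have p1 := h.P_quad_le_zero (θ n + 1) (y (θ n + 1) - ys)
  have p2 := h.z_weight (θ n) (z (θ n + 1) - zs)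
  have p3 := mul_le_mul_of_nonneg_left (h.L_bound (z (θ n + 1) - zs)) (sq_nonneg (β (θ n)))
  simp only [Function.comp, one_mulVec]
  unfold lyap
  linarith

/-- Convergence for sequences indexed from `0`, with the limit of `z` identified as `zs`. -/
theorem converges (h : IsIADMM B C b f g γ ε βlow σ L Q β P y z lam)
    (hfc : Continuous f) (hgc : Continuous g) (hK : IsKKT B C b f g ys zs ls)
    {l : ℝ} (hl : 0 ≤ l)
    (hΘ : ∀ k w, w ⬝ᵥ w ≤ l * (β k * (w ⬝ᵥ P k *ᵥ w) + β k ^ 2 * ((B *ᵥ w) ⬝ᵥ (B *ᵥ w)))) :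
    ∃ yb lb, IsKKT B C b f g yb zs lb ∧ Tendsto (fun k => y (k + 1)) atTop (nhds yb) ∧
      Tendsto (fun k => z (k + 1)) atTop (nhds zs) ∧
      Tendsto (fun k => lam (k + 1)) atTop (nhds lb) := by
  obtain ⟨t1, -⟩ := h.parts_tendsto hK
  obtain ⟨hanti, -⟩ := h.antitone_summable hK
  obtain ⟨K, hyK⟩ := h.y_error hl hΘ
  have hγ : 0 < γ := zero_lt_one.trans h.γ_gt
  have hz : Tendsto (fun k => z (k + 1)) atTop (nhds zs) := by
    have h1 : Tendsto (fun k => z (k + 1) - zs) atTop (nhds 0) := by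
      refine tendsto_zero_of_dot (squeeze_zero (fun k => dot_self_nonneg _) (fun k => ?_)
        (tendsto_const_mul_zero βlow⁻¹ t1.tendsto_atTop_zero))
      rw [inv_mul_eq_div, le_div_iff₀ h.βlow_pos, mul_comm]
      exact mul_le_mul_of_nonneg_right (h.β_low k) (dot_self_nonneg _)
    simpa using h1.add_const zs
  -- first the weighted `z`-error, then compactness for `y` and `lam`
  obtain ⟨φ, hφ, hφw⟩ := exists_subseq_weighted (w := β)
    (K := β 0 + (1 - ε) * σ / L)
    (add_pos_of_pos_of_nonneg (h.β_pos 0)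
      (div_nonneg (mul_nonneg (by linarith [h.ε_lt]) h.σ_pos.le) h.L_pos.le))
    h.β_pos h.β_linear
    (fun k => (h.dissip_nonneg_parts (zs := zs) k).1) t1
  set E := lyap B C b γ Q β P y z lam ys zs ls with hE
  have hE0 : ∀ k, E k ≤ E 0 := fun k => hanti (Nat.zero_le k)
  have hE00 : 0 ≤ E 0 := h.lyap_nonneg 0
  have hbd : ∀ n, (y (φ n + 1) - ys, lam (φ n + 1) - ls) ∈ Metric.closedBall
      (0 : (Fin n₁ → ℝ) × (Fin m → ℝ)) (Real.sqrt (max (|K| * E 0) (γ * E 0))) := by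
    intro n
    rw [mem_closedBall_zero_iff, Prod.norm_def]
    refine max_le (Real.le_sqrt_of_sq_le ?_) (Real.le_sqrt_of_sq_le ?_)
    · refine ((norm_sq_le_dot _).trans (hyK ys zs ls hK.2.2 _)).trans (le_max_of_le_left ?_)
      exact mul_le_mul (le_abs_self K) (hE0 _) (h.lyap_nonneg _) (abs_nonneg K)
    · refine ((norm_sq_le_dot _).trans (h.lam_error (ys := ys) (zs := zs) _)).trans
        (le_max_of_le_right ?_)
      exact mul_le_mul_of_nonneg_left (hE0 _) hγ.le
  obtain ⟨⟨a, c⟩, -, ψ, hψ, hlim⟩ := tendsto_subseq_of_bounded Metric.isBounded_closedBall hbd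
  have hθ : StrictMono (φ ∘ ψ) := hφ.comp hψ
  have hy : Tendsto (fun n => y ((φ ∘ ψ) n + 1)) atTop (nhds (a + ys)) := by
    simpa [Function.comp_def] using
      (((continuous_fst.tendsto (a, c)).comp hlim).add_const ys)
  have hlam : Tendsto (fun n => lam ((φ ∘ ψ) n + 1)) atTop (nhds (c + ls)) := by
    simpa [Function.comp_def] using
      (((continuous_snd.tendsto (a, c)).comp hlim).add_const ls)
  have hK' := h.kkt_of_subseq hfc hgc hK hθ hz hy hlam
  have hsub := h.lyap_subseq hK' hθ hy hlam (hφw.comp hψ.tendsto_atTop)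
  have hfull := (tendsto_iff_tendsto_subseq_of_antitone (h.antitone_summable hK').1
    hθ.tendsto_atTop).2 hsub
  refine ⟨a + ys, c + ls, hK', ?_, hz, ?_⟩
  · have h1 : Tendsto (fun k => y (k + 1) - (a + ys)) atTop (nhds 0) :=
      tendsto_zero_of_dot (squeeze_zero (fun k => dot_self_nonneg _)
        (fun k => hyK (a + ys) zs (c + ls) hK'.2.2 k) (tendsto_const_mul_zero K hfull))
    simpa using h1.add_const (a + ys)
  · have h1 : Tendsto (fun k => lam (k + 1) - (c + ls)) atTop (nhds 0) :=
      tendsto_zero_of_dot (squeeze_zero (fun k => dot_self_nonneg _)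
        (fun k => h.lam_error k) (tendsto_const_mul_zero γ hfull))
    simpa using h1.add_const (c + ls)

end IsIADMM

/-- Theorem 3.5 (nonergodic convergence of the IADMM iterates to a KKT solution). -/
theorem iadmm_iterate_convergence
    {m n₁ n₂ : ℕ}
    (B : Matrix (Fin m) (Fin n₁) ℝ) (C : Matrix (Fin m) (Fin n₂) ℝ) (b : Fin m → ℝ)
    (f : (Fin n₁ → ℝ) → ℝ) (g : (Fin n₂ → ℝ) → ℝ)
    (γ ε βlow τ σg : ℝ)
    (hγ : 1 < γ ∧ γ < (1 + Real.sqrt 5) / 2)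
    (hε : 0 < ε ∧ ε < 1) (hβlow : 0 < βlow ∧ βlow < 1) (hτ : 0 < τ ∧ τ < 1)
    (hσg : 0 < σg)
    (hf : ConvexOn ℝ Set.univ f) (hgconv : ConvexOn ℝ Set.univ g)
    (hgstr : ∀ u ξ, IsSubgradient g ξ u → ∀ w,
        g w ≥ g u + ξ ⬝ᵥ (w - u) + σg / 2 * ((w - u) ⬝ᵥ (w - u)))
    (Q : Matrix (Fin n₂) (Fin n₂) ℝ) (hQ : Q.PosSemidef)
    (hlamQ : 0 < lamMax (Cᵀ * C + Q))
    (β : ℕ → ℝ) (hβpos : ∀ k, 1 ≤ k → 0 < β k) (hβ1 : βlow ≤ β 1)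
    (P : ℕ → Matrix (Fin n₁) (Fin n₁) ℝ) (hP : ∀ k, 1 ≤ k → (P k).PosSemidef)
    (hPmono : ∀ k, 1 ≤ k → (β k • P k - β (k + 1) • P (k + 1)).PosSemidef)
    (hβlo : ∀ k, 1 ≤ k → max βlow (τ * β k) ≤ β (k + 1))
    (hβhi : ∀ k, 1 ≤ k →
      β (k + 1) ≤ Real.sqrt (β k ^ 2 + (1 - ε) * σg * β k / lamMax (Cᵀ * C + Q)))
    (y : ℕ → Fin n₁ → ℝ) (z : ℕ → Fin n₂ → ℝ) (lam : ℕ → Fin m → ℝ)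
    (hiter₁ : ∀ k, 1 ≤ k → IsSubgradient f
        (-(Bᵀ *ᵥ lam k + β k • (Bᵀ *ᵥ (B *ᵥ y (k + 1) + C *ᵥ z k - b))
            + P k *ᵥ (y (k + 1) - y k))) (y (k + 1)))
    (hiter₂ : ∀ k, 1 ≤ k → IsSubgradient g
        (-(Cᵀ *ᵥ lam k + β k • (Cᵀ *ᵥ (B *ᵥ y (k + 1) + C *ᵥ z (k + 1) - b))
            + β k • (Q *ᵥ (z (k + 1) - z k)))) (z (k + 1)))
    (hiter₃ : ∀ k, 1 ≤ k →
      lam (k + 1) = lam k + (γ * β k) • (B *ᵥ y (k + 1) + C *ᵥ z (k + 1) - b))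
    -- a KKT solution of problem (P) exists
    (ystar : Fin n₁ → ℝ) (zstar : Fin n₂ → ℝ) (lamstar : Fin m → ℝ)
    (hKKT₁ : IsSubgradient f (-(Bᵀ *ᵥ lamstar)) ystar)
    (hKKT₂ : IsSubgradient g (-(Cᵀ *ᵥ lamstar)) zstar)
    (hKKT₃ : B *ᵥ ystar + C *ᵥ zstar = b)
    -- uniform positive definiteness: β_k P_k + β_k² BᵀB ⪰ Θ ≻ 0
    (Θ : Matrix (Fin n₁) (Fin n₁) ℝ) (hΘ : Θ.PosDef)
    (hΘle : ∀ k, 1 ≤ k → (β k • P k + β k ^ 2 • (Bᵀ * B) - Θ).PosSemidef) :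
    ∃ (ys : Fin n₁ → ℝ) (zs : Fin n₂ → ℝ) (ls : Fin m → ℝ),
      IsSubgradient f (-(Bᵀ *ᵥ ls)) ys ∧
      IsSubgradient g (-(Cᵀ *ᵥ ls)) zs ∧
      B *ᵥ ys + C *ᵥ zs = b ∧
      Tendsto y atTop (nhds ys) ∧
      Tendsto z atTop (nhds zs) ∧
      Tendsto lam atTop (nhds ls) := by
  have hβ : ∀ k, βlow ≤ β (k + 1) := by
    intro k
    cases k with
    | zero => exact hβ1
    | succ k => exact (le_max_left _ _).trans (hβlo (k + 1) (by omega))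
  have hγsq : γ ^ 2 < 1 + γ := by
    have h5 : Real.sqrt 5 ^ 2 = 5 := Real.sq_sqrt (by norm_num)
    nlinarith [hγ.1, hγ.2, Real.sqrt_nonneg 5]
  -- the hypotheses hold for `k ≥ 1` only, so the sequences are shifted by one
  have h : IsIADMM B C b f g γ ε βlow σg (lamMax (Cᵀ * C + Q)) Q (fun k => β (k + 1))
      (fun k => P (k + 1)) (fun k => y (k + 1)) (fun k => z (k + 1)) (fun k => lam (k + 1)) :=
    { γ_gt := hγ.1
      γ_sq := hγsq
      ε_pos := hε.1
      ε_lt := hε.2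
      βlow_pos := hβlow.1
      σ_pos := hσg
      L_pos := hlamQ
      g_strong := hgstr
      Q_psd := hQ
      L_bound := fun w => by
        have h1 := lamMax_bound (Cᵀ * C + Q) w
        rw [add_mulVec, dotProduct_add, ← mulVec_mulVec, dotProduct_comm w, transpose_dot] at h1
        exact h1
      β_low := hβ
      β_growth := fun k => by
        have h0 : 0 < β (k + 1) := hβpos (k + 1) (by omega)
        have h1 : 0 ≤ (1 - ε) * σg * β (k + 1) / lamMax (Cᵀ * C + Q) :=
          div_nonneg (mul_nonneg (mul_nonneg (by linarith [hε.2]) hσg.le) h0.le) hlamQ.le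
        exact (Real.le_sqrt' (hβpos (k + 1 + 1) (by omega))).1 (hβhi (k + 1) (by omega))
      P_psd := fun k => hP (k + 1) (by omega)
      P_mono := fun k => hPmono (k + 1) (by omega)
      y_step := fun k => hiter₁ (k + 1) (by omega)
      z_step := fun k => hiter₂ (k + 1) (by omega)
      lam_step := fun k => hiter₃ (k + 1) (by omega) }
  obtain ⟨l, hl, hlw⟩ := posDef_lower hΘ
  have hfc : Continuous f := hf.locallyLipschitz.continuous
  have hgc : Continuous g := hgconv.locallyLipschitz.continuous
  obtain ⟨yb, lb, ⟨k1, k2, k3⟩, hy, hz, hlam⟩ :=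
    h.converges hfc hgc ⟨hKKT₁, hKKT₂, hKKT₃⟩ hl fun k w => (hlw w).trans <| by
      refine mul_le_mul_of_nonneg_left ?_ hl
      have h1 := quad_nonneg (hΘle (k + 1) (by omega)) w
      simp only [sub_mulVec, add_mulVec, smul_mulVec, dotProduct_sub, dotProduct_add,
        dotProduct_smul, smul_eq_mul, ← mulVec_mulVec] at h1
      rw [dotProduct_comm w (Bᵀ *ᵥ _), transpose_dot] at h1
      linarith
  exact ⟨yb, zstar, lb, k1, k2, k3, (tendsto_add_atTop_iff_nat 2).1 hy,
    (tendsto_add_atTop_iff_nat 2).1 hz, (tendsto_add_atTop_iff_nat 2).1 hlam⟩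
end

section
/- (R-linear convergence of IADMM, Theorem 3.8.) Assume the IADMM setting with P_k = 0 for all k. Suppose in addition: g is differentiable with ∇g Lipschitz continuous with constant L_g; C has full row rank, i.e. λ_min(CCᵀ) > 0; there is β̄ ≥ β̲ with β̲ ≤ β_k ≤ β̄ for all k; and (x*,λ*) = ((y*,z*),λ*) is a KKT solution of problem (P). Then there exist c ≥ 0 and ρ ∈ (0,1) such that for all k ≥ 2: L(x^k,λ*) − L(x*,λ*) ≤ cρ^k, ‖𝒜x^k − b‖² ≤ cρ^k, and ‖λ^k − λ*‖² ≤ cρ^k; that is, these three quantities converge to zero R-linearly. -/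
/-!
The proof exhibits a merit function that contracts by a fixed factor at every iteration.

Testing the optimality conditions of one iteration at the KKT point gives an energy inequality
(`energy_step`) for `‖λᵏ - λ*‖² / γ + βₖ² ‖zᵏ - z*‖²_{CᵀC+Q}`, whose only term of indefinite sign
is the product of `C(zᵏ⁺¹ - zᵏ)` with the residual `rᵏ⁺¹`. Strong monotonicity of the subgradients
of `g` at consecutive iterates together with Young's inequality (`cross_step`) bounds that product
at the cost of `(γ-1)² βₖ₋₁² ‖rᵏ‖²` and `βₖ₋₁² ‖zᵏ - zᵏ⁻¹‖²_Q`; adding these two terms to the energy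
gives the merit function `E`. The energy inequality contributes the coefficient `2 - γ` of
`βₖ² ‖rᵏ⁺¹‖²`, and what is left after paying `(γ-1)²` is `1 + γ - γ²`, which is positive exactly
because `γ` is below the golden ratio. The growth condition on `βₖ` allows the weight `βₖ²` to be
replaced by `βₖ₊₁²` at the cost of a fraction `1 - ε` of the strong convexity of `g`. Thus `E`
decreases by at least a quantity `D` containing positive multiples of the Lagrangian gap,
`‖zᵏ⁺¹ - z*‖²`, `‖rᵏ⁺¹‖²`, `‖zᵏ⁺¹ - zᵏ‖²` and `‖zᵏ⁺¹ - zᵏ‖²_Q`.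

The only part of `E` not visibly controlled by `D` is the dual error. Since `∇g` is Lipschitz, the
stationarity condition of `g` bounds `Cᵀ(λᵏ⁺¹ - λ*)`, and full row rank of `C` bounds
`λᵏ⁺¹ - λ*` itself (`dual_bound`). Hence `E (k+1) ≤ K * D k` with `K` independent of `k`
(`merit_le_decrease`), so `E (k+1) ≤ K / (K + 1) * E k`. The residual and the dual error are parts
of `E`, and the Lagrangian gap at `k + 1` is a part of `D k`, hence bounded by `E k`.
-/


open Matrix Filter

/-- The smallest eigenvalue of a symmetric matrix, as the infimum of the
Rayleigh quotient over unit vectors. -/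
noncomputable def lamMin {n : ℕ} (A : Matrix (Fin n) (Fin n) ℝ) : ℝ :=
  sInf { r | ∃ w : Fin n → ℝ, w ⬝ᵥ w = 1 ∧ w ⬝ᵥ A *ᵥ w = r }

/-! ### Extreme eigenvalues, gradients and quadratic forms -/

/-- Every matrix is bounded as an operator for the Euclidean norm; Cauchy–Schwarz on each row
gives the squared Frobenius norm as the constant. -/
lemma exists_mulVec_bound {p q : ℕ} (A : Matrix (Fin p) (Fin q) ℝ) :
    ∃ K : ℝ, 0 ≤ K ∧ ∀ x, (A *ᵥ x) ⬝ᵥ (A *ᵥ x) ≤ K * (x ⬝ᵥ x) := by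
  refine ⟨∑ i, ∑ j, A i j ^ 2, by positivity, fun x => ?_⟩
  rw [Finset.sum_mul]
  refine Finset.sum_le_sum fun i _ => ?_
  have h := Finset.sum_mul_sq_le_sq_mul_sq Finset.univ (A i) x
  simp only [dotProduct, mulVec, ← pow_two]
  exact h

lemma dotProduct_self_nonneg_real {p : ℕ} (x : Fin p → ℝ) : 0 ≤ x ⬝ᵥ x :=
  Finset.sum_nonneg fun _ _ => mul_self_nonneg _

lemma normalize_dotProduct_self {p : ℕ} (x : Fin p → ℝ) (hx : 0 < x ⬝ᵥ x) :
    ((Real.sqrt (x ⬝ᵥ x))⁻¹ • x) ⬝ᵥ ((Real.sqrt (x ⬝ᵥ x))⁻¹ • x) = 1 := by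
  have h1 : Real.sqrt (x ⬝ᵥ x) * Real.sqrt (x ⬝ᵥ x) = x ⬝ᵥ x := Real.mul_self_sqrt hx.le
  rw [smul_dotProduct, dotProduct_smul, smul_eq_mul, smul_eq_mul, ← mul_assoc, ← mul_inv, h1]
  exact inv_mul_cancel₀ hx.ne'

lemma rayleigh_normalize {p : ℕ} (A : Matrix (Fin p) (Fin p) ℝ) (x : Fin p → ℝ) :
    ((Real.sqrt (x ⬝ᵥ x))⁻¹ • x) ⬝ᵥ A *ᵥ ((Real.sqrt (x ⬝ᵥ x))⁻¹ • x)
      = (x ⬝ᵥ A *ᵥ x) / (x ⬝ᵥ x) := by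
  have h1 : Real.sqrt (x ⬝ᵥ x) * Real.sqrt (x ⬝ᵥ x) = x ⬝ᵥ x :=
    Real.mul_self_sqrt (dotProduct_self_nonneg_real x)
  rw [mulVec_smul, smul_dotProduct, dotProduct_smul, smul_eq_mul, smul_eq_mul, ← mul_assoc,
    ← mul_inv, h1]
  ring

lemma rayleigh_le_lamMax {p : ℕ} (A : Matrix (Fin p) (Fin p) ℝ) (x : Fin p → ℝ) :
    x ⬝ᵥ A *ᵥ x ≤ lamMax A * (x ⬝ᵥ x) := by
  rcases (dotProduct_self_nonneg_real x).eq_or_lt with h0 | hx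
  · have : x = 0 := dotProduct_self_eq_zero.mp h0.symm
    simp [this]
  -- boundedness of the Rayleigh quotients, without which the supremum would be the junk value `0`
  have hbdd : BddAbove { r | ∃ w : Fin p → ℝ, w ⬝ᵥ w = 1 ∧ w ⬝ᵥ A *ᵥ w = r } := by
    obtain ⟨K, -, hK⟩ := exists_mulVec_bound A
    refine ⟨(1 + K) / 2, ?_⟩
    rintro r ⟨w, hw, rfl⟩
    have h1 := hK w
    have h2 := dotProduct_self_nonneg_real (w - A *ᵥ w)
    simp only [sub_dotProduct, dotProduct_sub] at h2
    rw [dotProduct_comm (A *ᵥ w) w] at h2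
    rw [hw] at h1 h2
    linarith
  have h := le_csSup hbdd ⟨_, normalize_dotProduct_self x hx, rayleigh_normalize A x⟩
  exact (div_le_iff₀ hx).mp h

lemma lamMin_mul_transpose_le {p q : ℕ} (C : Matrix (Fin p) (Fin q) ℝ) (x : Fin p → ℝ) :
    lamMin (C * Cᵀ) * (x ⬝ᵥ x) ≤ (Cᵀ *ᵥ x) ⬝ᵥ (Cᵀ *ᵥ x) := by
  have hform : ∀ w : Fin p → ℝ, w ⬝ᵥ (C * Cᵀ) *ᵥ w = (Cᵀ *ᵥ w) ⬝ᵥ (Cᵀ *ᵥ w) := by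
    intro w
    rw [← mulVec_mulVec, dotProduct_mulVec, ← mulVec_transpose]
  rcases (dotProduct_self_nonneg_real x).eq_or_lt with h0 | hx
  · have : x = 0 := dotProduct_self_eq_zero.mp h0.symm
    simp [this]
  have hbdd : BddBelow { r | ∃ w : Fin p → ℝ, w ⬝ᵥ w = 1 ∧ w ⬝ᵥ (C * Cᵀ) *ᵥ w = r } := by
    refine ⟨0, ?_⟩
    rintro r ⟨w, -, rfl⟩
    rw [hform]
    exact dotProduct_self_nonneg_real _
  have h := csInf_le hbdd ⟨_, normalize_dotProduct_self x hx, rayleigh_normalize (C * Cᵀ) x⟩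
  rw [← hform]
  exact (le_div_iff₀ hx).mp h

/-- A differentiable function has at most one subgradient at a point, namely its gradient. -/
lemma subgradient_eq_gradient {p : ℕ} {g : (Fin p → ℝ) → ℝ} (hg : Differentiable ℝ g)
    {gradg : (Fin p → ℝ) → (Fin p → ℝ)} (hgrad : ∀ u w, fderiv ℝ g u w = gradg u ⬝ᵥ w)
    {ξ u : Fin p → ℝ} (h : IsSubgradient g ξ u) : ξ = gradg u := by
  let ℓ : (Fin p → ℝ) →L[ℝ] ℝ := LinearMap.toContinuousLinearMap
    { toFun := fun w => ξ ⬝ᵥ w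
      map_add' := fun a c => dotProduct_add _ _ _
      map_smul' := fun a c => dotProduct_smul _ _ _ }
  -- `g - ℓ` is minimal at `u`, so its derivative vanishes there
  have hmin : IsLocalMin (fun w => g w - ℓ w) u := by
    refine Filter.Eventually.of_forall fun w => ?_
    have h1 := h w
    rw [dotProduct_sub] at h1
    change g u - ξ ⬝ᵥ u ≤ g w - ξ ⬝ᵥ w
    linarith
  have hd := hmin.hasFDerivAt_eq_zero ((hg u).hasFDerivAt.sub ℓ.hasFDerivAt)
  refine dotProduct_eq _ _ fun w => ?_
  have h2 : fderiv ℝ g u w - ℓ w = 0 := by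
    have := congrArg (fun T : (Fin p → ℝ) →L[ℝ] ℝ => T w) hd
    simpa using this
  rw [hgrad] at h2
  change gradg u ⬝ᵥ w - ξ ⬝ᵥ w = 0 at h2
  linarith

lemma quadForm_add_le {m p : ℕ} (C : Matrix (Fin m) (Fin p) ℝ) (Q : Matrix (Fin p) (Fin p) ℝ)
    (x : Fin p → ℝ) :
    (C *ᵥ x) ⬝ᵥ (C *ᵥ x) + x ⬝ᵥ Q *ᵥ x ≤ lamMax (Cᵀ * C + Q) * (x ⬝ᵥ x) := by
  have h := rayleigh_le_lamMax (Cᵀ * C + Q) x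
  rwa [add_mulVec, dotProduct_add, ← mulVec_mulVec, dotProduct_mulVec, ← mulVec_transpose,
    transpose_transpose] at h

lemma transpose_mulVec_dotProduct {m p : ℕ} (C : Matrix (Fin m) (Fin p) ℝ) (v : Fin m → ℝ)
    (x : Fin p → ℝ) : (Cᵀ *ᵥ v) ⬝ᵥ x = v ⬝ᵥ (C *ᵥ x) := by
  rw [mulVec_transpose, dotProduct_mulVec]

lemma psd_symm {p : ℕ} {Q : Matrix (Fin p) (Fin p) ℝ} (hQ : Q.PosSemidef) (x v : Fin p → ℝ) :
    (Q *ᵥ x) ⬝ᵥ v = (Q *ᵥ v) ⬝ᵥ x := by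
  have hs : Q.IsSymm := by simpa using hQ.1
  have h : Qᵀ = Q := hs
  conv_lhs => rw [← h]
  rw [transpose_mulVec_dotProduct, dotProduct_comm]

lemma psd_nonneg {p : ℕ} {Q : Matrix (Fin p) (Fin p) ℝ} (hQ : Q.PosSemidef) (x : Fin p → ℝ) :
    0 ≤ x ⬝ᵥ Q *ᵥ x := by
  simpa using hQ.dotProduct_mulVec_nonneg x

/-! ### Inequalities for one iteration -/

/-- The basic inequality of one iteration, obtained by testing the two optimality conditions at
the KKT point. Here `e = λᵏ - λ*`, `r` is the new residual, `u = zᵏ - z*`, `v = zᵏ⁺¹ - z*`, and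
`Θ` is the new Lagrangian gap. -/
lemma energy_step {m p : ℕ} (C : Matrix (Fin m) (Fin p) ℝ) {Q : Matrix (Fin p) (Fin p) ℝ}
    (hQ : Q.PosSemidef) {γ b σ Θ : ℝ} (hγ : 0 < γ) (hb : 0 < b) (e e' r : Fin m → ℝ)
    (u v : Fin p → ℝ) (he : e' = e + (γ * b) • r)
    (h : Θ + (e + b • (r - C *ᵥ (v - u))) ⬝ᵥ (r - C *ᵥ v) + (e + b • r) ⬝ᵥ (C *ᵥ v)
      + b * ((Q *ᵥ (v - u)) ⬝ᵥ v) + σ / 2 * (v ⬝ᵥ v) ≤ 0) :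
    2 * b * Θ + (e' ⬝ᵥ e') / γ + (2 - γ) * b ^ 2 * (r ⬝ᵥ r)
      - 2 * b ^ 2 * ((C *ᵥ (v - u)) ⬝ᵥ r)
      + b ^ 2 * ((C *ᵥ v) ⬝ᵥ (C *ᵥ v) + v ⬝ᵥ Q *ᵥ v)
      + b ^ 2 * ((C *ᵥ (v - u)) ⬝ᵥ (C *ᵥ (v - u)) + (v - u) ⬝ᵥ Q *ᵥ (v - u))
      + b * σ * (v ⬝ᵥ v)
      ≤ (e ⬝ᵥ e) / γ + b ^ 2 * ((C *ᵥ u) ⬝ᵥ (C *ᵥ u) + u ⬝ᵥ Q *ᵥ u) := by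
  have hsym := psd_symm hQ u v
  have hee : (e' ⬝ᵥ e') / γ = (e ⬝ᵥ e) / γ + 2 * b * (e ⬝ᵥ r) + γ * b ^ 2 * (r ⬝ᵥ r) := by
    subst he
    simp only [add_dotProduct, dotProduct_add, smul_dotProduct, dotProduct_smul, smul_eq_mul]
    rw [dotProduct_comm r e]
    field_simp
    ring
  rw [hee]
  have h2 := mul_le_mul_of_nonneg_left h (by positivity : (0 : ℝ) ≤ 2 * b)
  simp only [mulVec_sub, add_dotProduct, smul_dotProduct, sub_dotProduct, dotProduct_sub,
    smul_eq_mul] at h2 ⊢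
  rw [dotProduct_comm v (Q *ᵥ v), dotProduct_comm u (Q *ᵥ u), dotProduct_comm v (Q *ᵥ u),
    dotProduct_comm u (Q *ᵥ v), dotProduct_comm (C *ᵥ u) (C *ᵥ v)] at *
  rw [dotProduct_comm (C *ᵥ u) r, dotProduct_comm (C *ᵥ v) r] at *
  nlinarith [h2]

/-- Lower bound for the cross term of `energy_step`, from strong monotonicity of the subgradients
of `g` at two consecutive iterates. Primes mark the previous iteration; `d`, `d'` are the
increments of `z`. -/
lemma cross_step {m p : ℕ} (C : Matrix (Fin m) (Fin p) ℝ) {Q : Matrix (Fin p) (Fin p) ℝ}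
    (hQ : Q.PosSemidef) {γ b b' σ : ℝ} (hb : 0 < b) (r r' : Fin m → ℝ) (d d' : Fin p → ℝ)
    (h : (γ - 1) * b' * ((C *ᵥ d) ⬝ᵥ r') + b * ((C *ᵥ d) ⬝ᵥ r) + b * (d ⬝ᵥ Q *ᵥ d)
      - b' * (d ⬝ᵥ Q *ᵥ d') + σ * (d ⬝ᵥ d) ≤ 0) :
    2 * b * σ * (d ⬝ᵥ d) + b ^ 2 * (d ⬝ᵥ Q *ᵥ d) - b' ^ 2 * (d' ⬝ᵥ Q *ᵥ d')
      - b ^ 2 * ((C *ᵥ d) ⬝ᵥ (C *ᵥ d)) - (γ - 1) ^ 2 * b' ^ 2 * (r' ⬝ᵥ r')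
      ≤ - 2 * b ^ 2 * ((C *ᵥ d) ⬝ᵥ r) := by
  have hsym := psd_symm hQ d d'
  have h1 := dotProduct_self_nonneg_real (b • (C *ᵥ d) + ((γ - 1) * b') • r')
  have h2 := psd_nonneg hQ (b • d - b' • d')
  simp only [mulVec_sub, mulVec_smul, add_dotProduct, dotProduct_add, smul_dotProduct,
    sub_dotProduct, dotProduct_smul, dotProduct_sub, smul_eq_mul] at h1 h2
  rw [dotProduct_comm r' (C *ᵥ d)] at h1
  have h4 : d' ⬝ᵥ Q *ᵥ d = d ⬝ᵥ Q *ᵥ d' := by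
    rw [dotProduct_comm d', dotProduct_comm d, hsym]
  rw [h4] at h2
  have h3 := mul_le_mul_of_nonneg_left h (by positivity : (0 : ℝ) ≤ 2 * b)
  nlinarith [h1, h2, h3]

/-- The dual error is controlled by the other error quantities: since `C` has full row rank, it
suffices to bound `Cᵀe'`, which the stationarity condition of `g` expresses through a gradient
difference `w`, the increment `d` and the residual `r`. -/
lemma dual_bound {m p : ℕ} (C : Matrix (Fin m) (Fin p) ℝ) (Q : Matrix (Fin p) (Fin p) ℝ)
    {γ b KQ KC : ℝ} (e' r : Fin m → ℝ) (d w : Fin p → ℝ)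
    (hKQ : (Q *ᵥ d) ⬝ᵥ (Q *ᵥ d) ≤ KQ * (d ⬝ᵥ d))
    (hKC : (Cᵀ *ᵥ r) ⬝ᵥ (Cᵀ *ᵥ r) ≤ KC * (r ⬝ᵥ r))
    (h : Cᵀ *ᵥ e' = ((γ - 1) * b) • (Cᵀ *ᵥ r) - b • (Q *ᵥ d) - w) :
    lamMin (C * Cᵀ) * (e' ⬝ᵥ e') ≤
      3 * (w ⬝ᵥ w + b ^ 2 * (KQ * (d ⬝ᵥ d)) + (γ - 1) ^ 2 * b ^ 2 * (KC * (r ⬝ᵥ r))) := by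
  refine (lamMin_mul_transpose_le C e').trans ?_
  rw [h]
  set X := ((γ - 1) * b) • (Cᵀ *ᵥ r) with hX
  set Y := b • (Q *ᵥ d) with hY
  have hXX : X ⬝ᵥ X ≤ (γ - 1) ^ 2 * b ^ 2 * (KC * (r ⬝ᵥ r)) := by
    simp only [hX, smul_dotProduct, dotProduct_smul, smul_eq_mul]
    have := mul_le_mul_of_nonneg_left hKC (sq_nonneg ((γ - 1) * b))
    linarith
  have hYY : Y ⬝ᵥ Y ≤ b ^ 2 * (KQ * (d ⬝ᵥ d)) := by
    simp only [hY, smul_dotProduct, dotProduct_smul, smul_eq_mul]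
    have := mul_le_mul_of_nonneg_left hKQ (sq_nonneg b)
    linarith
  have h1 := dotProduct_self_nonneg_real (X + Y)
  have h2 := dotProduct_self_nonneg_real (X + w)
  have h3 := dotProduct_self_nonneg_real (Y - w)
  simp only [add_dotProduct, dotProduct_add, sub_dotProduct, dotProduct_sub] at *
  rw [dotProduct_comm Y X, dotProduct_comm w X, dotProduct_comm w Y] at *
  linarith

/-- The merit function after a step (left-hand side) is at most a constant times its guaranteed
decrease in that step (the last factor on the right). Here `N` is the squared dual error, `M`, `U`
the squared distance of the new `z` to `z*` in the seminorm of `CᵀC + Q` and in the Euclidean norm,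
`R` the squared residual, `S`, `q` the squared increment of `z` in the Euclidean norm and in the
seminorm of `Q`, and `Θ` the Lagrangian gap. -/
lemma merit_le_decrease {γ b b'' βl βb ε σ δ μ Λ KQ KC Lg U R S q M N Θ : ℝ}
    (hγ : 1 < γ) (hβl : 0 < βl) (hb : βl ≤ b) (hb'' : 0 ≤ b'') (hbb : b ≤ βb) (hbb'' : b'' ≤ βb)
    (hε : 0 < ε) (hσ : 0 < σ) (hδ : 0 < δ) (hμ : 0 < μ) (hΛ : 0 ≤ Λ) (hKQ : 0 ≤ KQ)
    (hKC : 0 ≤ KC) (hU : 0 ≤ U) (hR : 0 ≤ R) (hS : 0 ≤ S) (hq : 0 ≤ q) (hM0 : 0 ≤ M)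
    (hΘ : 0 ≤ Θ) (hM : M ≤ Λ * U)
    (hN : μ * N ≤ 3 * (Lg ^ 2 * U + b ^ 2 * (KQ * S) + (γ - 1) ^ 2 * b ^ 2 * (KC * R))) :
    N / γ + b'' ^ 2 * M + (γ - 1) ^ 2 * b ^ 2 * R + b ^ 2 * q ≤
      (3 / (γ * μ) * (Lg ^ 2 / (ε * σ * βl) + βb ^ 2 * KQ / (2 * σ * βl) + (γ - 1) ^ 2 * KC / δ)
        + βb ^ 2 * Λ / (ε * σ * βl) + (γ - 1) ^ 2 / δ + 1)
      * (2 * b * Θ + ε * σ * b * U + δ * b ^ 2 * R + 2 * σ * b * S + b ^ 2 * q) := by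
  have hb0 : 0 < b := hβl.trans_le hb
  have hγ0 : 0 < γ := by linarith
  set D := 2 * b * Θ + ε * σ * b * U + δ * b ^ 2 * R + 2 * σ * b * S + b ^ 2 * q with hD
  have t1 : 0 ≤ 2 * b * Θ := by positivity
  have t2 : 0 ≤ ε * σ * b * U := by positivity
  have t3 : 0 ≤ δ * b ^ 2 * R := by positivity
  have t4 : 0 ≤ 2 * σ * b * S := by positivity
  have t5 : 0 ≤ b ^ 2 * q := by positivity
  have hUD : U ≤ D / (ε * σ * βl) := by
    rw [le_div_iff₀ (by positivity)]
    have : ε * σ * βl * U ≤ ε * σ * b * U := by gcongr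
    linarith
  have hSD : S ≤ D / (2 * σ * βl) := by
    rw [le_div_iff₀ (by positivity)]
    have : 2 * σ * βl * S ≤ 2 * σ * b * S := by gcongr
    linarith
  have hRD : b ^ 2 * R ≤ D / δ := by
    rw [le_div_iff₀ hδ]
    linarith
  have hqD : b ^ 2 * q ≤ D := by linarith
  have hMD : b'' ^ 2 * M ≤ βb ^ 2 * Λ / (ε * σ * βl) * D := by
    calc b'' ^ 2 * M ≤ βb ^ 2 * (Λ * (D / (ε * σ * βl))) := by
          gcongr
          exact hM.trans (by gcongr)
      _ = _ := by ring
  have hND : N / γ ≤ 3 / (γ * μ) *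
      (Lg ^ 2 / (ε * σ * βl) + βb ^ 2 * KQ / (2 * σ * βl) + (γ - 1) ^ 2 * KC / δ) * D := by
    have e1 : Lg ^ 2 * U ≤ Lg ^ 2 * (D / (ε * σ * βl)) := by gcongr
    have e2 : b ^ 2 * (KQ * S) ≤ βb ^ 2 * (KQ * (D / (2 * σ * βl))) := by gcongr
    have e3 : (γ - 1) ^ 2 * KC * (b ^ 2 * R) ≤ (γ - 1) ^ 2 * KC * (D / δ) := by gcongr
    have e4 : N / γ = 1 / (γ * μ) * (μ * N) := by field_simp
    rw [e4]
    calc 1 / (γ * μ) * (μ * N) ≤ 1 / (γ * μ) * (3 * (Lg ^ 2 * (D / (ε * σ * βl))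
          + βb ^ 2 * (KQ * (D / (2 * σ * βl))) + (γ - 1) ^ 2 * KC * (D / δ))) := by
          refine mul_le_mul_of_nonneg_left ?_ (by positivity)
          linarith
      _ = _ := by ring
  have hRD' : (γ - 1) ^ 2 * b ^ 2 * R ≤ (γ - 1) ^ 2 / δ * D := by
    calc (γ - 1) ^ 2 * b ^ 2 * R = (γ - 1) ^ 2 * (b ^ 2 * R) := by ring
      _ ≤ (γ - 1) ^ 2 * (D / δ) := by gcongr
      _ = _ := by ring
  linarith

/-- The hypothesis of `energy_step`: the subgradient inequalities for `f` and `g` at the new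
iterate, tested at the KKT point and added. -/
lemma optimality_step {m n₁ n₂ : ℕ}
    (B : Matrix (Fin m) (Fin n₁) ℝ) (C : Matrix (Fin m) (Fin n₂) ℝ) (b : Fin m → ℝ)
    (Q : Matrix (Fin n₂) (Fin n₂) ℝ) {β σ fy fs gz gs : ℝ}
    (y ys : Fin n₁ → ℝ) (z z' zs : Fin n₂ → ℝ) (l ls : Fin m → ℝ)
    (hK : B *ᵥ ys + C *ᵥ zs = b)
    (hf : fs ≥ fy + (-(Bᵀ *ᵥ l + β • (Bᵀ *ᵥ (B *ᵥ y + C *ᵥ z - b)))) ⬝ᵥ (ys - y))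
    (hg : gs ≥ gz + (-(Cᵀ *ᵥ l + β • (Cᵀ *ᵥ (B *ᵥ y + C *ᵥ z' - b)) + β • (Q *ᵥ (z' - z))))
      ⬝ᵥ (zs - z') + σ / 2 * ((zs - z') ⬝ᵥ (zs - z'))) :
    (fy + gz + ls ⬝ᵥ (B *ᵥ y + C *ᵥ z' - b) - (fs + gs))
      + ((l - ls) + β • ((B *ᵥ y + C *ᵥ z' - b) - C *ᵥ ((z' - zs) - (z - zs))))
        ⬝ᵥ ((B *ᵥ y + C *ᵥ z' - b) - C *ᵥ (z' - zs))
      + ((l - ls) + β • (B *ᵥ y + C *ᵥ z' - b)) ⬝ᵥ (C *ᵥ (z' - zs))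
      + β * ((Q *ᵥ ((z' - zs) - (z - zs))) ⬝ᵥ (z' - zs))
      + σ / 2 * ((z' - zs) ⬝ᵥ (z' - zs)) ≤ 0 := by
  set r := B *ᵥ y + C *ᵥ z' - b with hr
  have h1 : B *ᵥ (ys - y) = -(r - C *ᵥ (z' - zs)) := by
    rw [hr, ← hK, mulVec_sub, mulVec_sub]; abel
  have h2 : B *ᵥ y + C *ᵥ z - b = r - C *ᵥ (z' - z) := by
    rw [hr, mulVec_sub]; abel
  have h3 : zs - z' = -(z' - zs) := by abel
  rw [h2] at hf
  rw [h3] at hg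
  rw [show (z' - zs) - (z - zs) = z' - z by abel]
  simp only [neg_dotProduct, dotProduct_neg, add_dotProduct, smul_dotProduct,
    transpose_mulVec_dotProduct, smul_eq_mul, h1] at hf
  simp only [neg_dotProduct, dotProduct_neg, neg_neg, add_dotProduct, smul_dotProduct,
    transpose_mulVec_dotProduct, smul_eq_mul] at hg
  have h4 : ls ⬝ᵥ r = ls ⬝ᵥ (r - C *ᵥ (z' - zs)) + ls ⬝ᵥ (C *ᵥ (z' - zs)) := by
    rw [← dotProduct_add, sub_add_cancel]
  simp only [add_dotProduct, smul_dotProduct, sub_dotProduct _ _ (_ - _),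
    sub_dotProduct l ls, smul_eq_mul] at hf hg ⊢
  linarith

/-- The hypothesis of `cross_step`: strong monotonicity of the subgradients of `g` at two
consecutive iterates. -/
lemma monotone_step {m p : ℕ} (C : Matrix (Fin m) (Fin p) ℝ) (Q : Matrix (Fin p) (Fin p) ℝ)
    {g : (Fin p → ℝ) → ℝ} {γ σ b b' : ℝ}
    (hgstr : ∀ u ξ, IsSubgradient g ξ u → ∀ w,
        g w ≥ g u + ξ ⬝ᵥ (w - u) + σ / 2 * ((w - u) ⬝ᵥ (w - u)))
    (l l' r r' : Fin m → ℝ) (z z' d' : Fin p → ℝ) (hl : l = l' + (γ * b') • r')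
    (h : IsSubgradient g (-(Cᵀ *ᵥ l + b • (Cᵀ *ᵥ r) + b • (Q *ᵥ (z' - z)))) z')
    (h' : IsSubgradient g (-(Cᵀ *ᵥ l' + b' • (Cᵀ *ᵥ r') + b' • (Q *ᵥ d'))) z) :
    (γ - 1) * b' * ((C *ᵥ (z' - z)) ⬝ᵥ r') + b * ((C *ᵥ (z' - z)) ⬝ᵥ r)
      + b * ((z' - z) ⬝ᵥ Q *ᵥ (z' - z)) - b' * ((z' - z) ⬝ᵥ Q *ᵥ d')
      + σ * ((z' - z) ⬝ᵥ (z' - z)) ≤ 0 := by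
  have h1 := hgstr _ _ h z
  have h2 := hgstr _ _ h' z'
  rw [show z - z' = -(z' - z) by abel] at h1
  set d := z' - z
  subst hl
  simp only [neg_dotProduct, dotProduct_neg, neg_neg, add_dotProduct, smul_dotProduct,
    transpose_mulVec_dotProduct, smul_eq_mul] at h1 h2
  rw [dotProduct_comm (C *ᵥ d) r', dotProduct_comm (C *ᵥ d) r, dotProduct_comm d (Q *ᵥ d),
    dotProduct_comm d (Q *ᵥ d')]
  linarith

/-! ### Linear convergence -/

lemma geometric_decay {E : ℕ → ℝ} {ρ : ℝ} (hρ : 0 < ρ)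
    (h : ∀ k, 2 ≤ k → E (k + 1) ≤ ρ * E k) :
    ∀ k, 2 ≤ k → E k ≤ E 2 / ρ ^ 2 * ρ ^ k := by
  intro k hk
  induction k, hk using Nat.le_induction with
  | base => rw [div_mul_cancel₀ _ (by positivity)]
  | succ n hn ih =>
    calc E (n + 1) ≤ ρ * E n := h n hn
      _ ≤ ρ * (E 2 / ρ ^ 2 * ρ ^ n) := by gcongr
      _ = _ := by ring

set_option maxHeartbeats 1000000 in
/-- Theorem 3.8 (R-linear convergence of IADMM with `P_k = 0`, `∇g` Lipschitz,
`C` of full row rank and bounded penalty parameters). -/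
theorem iadmm_linear_convergence
    {m n₁ n₂ : ℕ}
    (B : Matrix (Fin m) (Fin n₁) ℝ) (C : Matrix (Fin m) (Fin n₂) ℝ) (b : Fin m → ℝ)
    (f : (Fin n₁ → ℝ) → ℝ) (g : (Fin n₂ → ℝ) → ℝ)
    (γ ε βlow τ σg : ℝ)
    (hγ : 1 < γ ∧ γ < (1 + Real.sqrt 5) / 2)
    (hε : 0 < ε ∧ ε < 1) (hβlow : 0 < βlow ∧ βlow < 1) (hτ : 0 < τ ∧ τ < 1)
    (hσg : 0 < σg)
    (hf : ConvexOn ℝ Set.univ f) (hgconv : ConvexOn ℝ Set.univ g)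
    (hgstr : ∀ u ξ, IsSubgradient g ξ u → ∀ w,
        g w ≥ g u + ξ ⬝ᵥ (w - u) + σg / 2 * ((w - u) ⬝ᵥ (w - u)))
    (Q : Matrix (Fin n₂) (Fin n₂) ℝ) (hQ : Q.PosSemidef)
    (hlamQ : 0 < lamMax (Cᵀ * C + Q))
    (β : ℕ → ℝ) (hβpos : ∀ k, 1 ≤ k → 0 < β k) (hβ1 : βlow ≤ β 1)
    (hβlo : ∀ k, 1 ≤ k → max βlow (τ * β k) ≤ β (k + 1))
    (hβhi : ∀ k, 1 ≤ k →
      β (k + 1) ≤ Real.sqrt (β k ^ 2 + (1 - ε) * σg * β k / lamMax (Cᵀ * C + Q)))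
    (y : ℕ → Fin n₁ → ℝ) (z : ℕ → Fin n₂ → ℝ) (lam : ℕ → Fin m → ℝ)
    -- iterate conditions with `P_k = 0`
    (hiter₁ : ∀ k, 1 ≤ k → IsSubgradient f
        (-(Bᵀ *ᵥ lam k + β k • (Bᵀ *ᵥ (B *ᵥ y (k + 1) + C *ᵥ z k - b)))) (y (k + 1)))
    (hiter₂ : ∀ k, 1 ≤ k → IsSubgradient g
        (-(Cᵀ *ᵥ lam k + β k • (Cᵀ *ᵥ (B *ᵥ y (k + 1) + C *ᵥ z (k + 1) - b))
            + β k • (Q *ᵥ (z (k + 1) - z k)))) (z (k + 1)))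
    (hiter₃ : ∀ k, 1 ≤ k →
      lam (k + 1) = lam k + (γ * β k) • (B *ᵥ y (k + 1) + C *ᵥ z (k + 1) - b))
    -- `g` differentiable with `L_g`-Lipschitz gradient
    (hgdiff : Differentiable ℝ g)
    (gradg : (Fin n₂ → ℝ) → (Fin n₂ → ℝ))
    (hgrad : ∀ u w, fderiv ℝ g u w = gradg u ⬝ᵥ w)
    (Lg : ℝ) (hLg : 0 ≤ Lg)
    (hLip : ∀ u v, vnorm (gradg u - gradg v) ≤ Lg * vnorm (u - v))
    -- `C` has full row rank
    (hC : 0 < lamMin (C * Cᵀ))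
    -- penalty parameters bounded
    (βbar : ℝ) (hβbar : βlow ≤ βbar) (hβbd : ∀ k, 1 ≤ k → βlow ≤ β k ∧ β k ≤ βbar)
    -- a KKT solution
    (ystar : Fin n₁ → ℝ) (zstar : Fin n₂ → ℝ) (lamstar : Fin m → ℝ)
    (hKKT₁ : IsSubgradient f (-(Bᵀ *ᵥ lamstar)) ystar)
    (hKKT₂ : IsSubgradient g (-(Cᵀ *ᵥ lamstar)) zstar)
    (hKKT₃ : B *ᵥ ystar + C *ᵥ zstar = b) :
    ∃ c : ℝ, 0 ≤ c ∧ ∃ ρ : ℝ, 0 < ρ ∧ ρ < 1 ∧ ∀ k, 2 ≤ k →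
      (f (y k) + g (z k) + lamstar ⬝ᵥ (B *ᵥ y k + C *ᵥ z k - b))
        - (f ystar + g zstar + lamstar ⬝ᵥ (B *ᵥ ystar + C *ᵥ zstar - b)) ≤ c * ρ ^ k ∧
      (B *ᵥ y k + C *ᵥ z k - b) ⬝ᵥ (B *ᵥ y k + C *ᵥ z k - b) ≤ c * ρ ^ k ∧
      (lam k - lamstar) ⬝ᵥ (lam k - lamstar) ≤ c * ρ ^ k := by
  obtain ⟨hγ1, hγ2⟩ := hγ
  have hβl := hβlow.1
  have hδ : 0 < 1 + γ - γ ^ 2 := by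
    have h5 : Real.sqrt 5 ^ 2 = 5 := Real.sq_sqrt (by norm_num)
    have h50 := Real.sqrt_nonneg 5
    nlinarith
  obtain ⟨KQ, hKQ0, hKQ⟩ := exists_mulVec_bound Q
  obtain ⟨KC, hKC0, hKC⟩ := exists_mulVec_bound Cᵀ
  set Λ := lamMax (Cᵀ * C + Q) with hΛ
  set r : ℕ → Fin m → ℝ := fun k => B *ᵥ y k + C *ᵥ z k - b with hr
  set Θ : ℕ → ℝ := fun k => f (y k) + g (z k) + lamstar ⬝ᵥ r k - (f ystar + g zstar) with hΘdef
  -- the squared seminorm induced by `CᵀC + Q`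
  set M : (Fin n₂ → ℝ) → ℝ := fun x => (C *ᵥ x) ⬝ᵥ (C *ᵥ x) + x ⬝ᵥ Q *ᵥ x with hMdef
  have hM0 : ∀ x, 0 ≤ M x := fun x =>
    add_nonneg (dotProduct_self_nonneg_real _) (psd_nonneg hQ x)
  -- the merit function; it is only meaningful for `k ≥ 2`, because of the index `k - 1`
  set E : ℕ → ℝ := fun k => ((lam k - lamstar) ⬝ᵥ (lam k - lamstar)) / γ
    + β k ^ 2 * M (z k - zstar) + (γ - 1) ^ 2 * β (k - 1) ^ 2 * (r k ⬝ᵥ r k)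
    + β (k - 1) ^ 2 * ((z k - z (k - 1)) ⬝ᵥ Q *ᵥ (z k - z (k - 1))) with hE
  have hΘ0 : ∀ k, 0 ≤ Θ k := by
    intro k
    have h1 := hKKT₁ (y k)
    have h2 := hKKT₂ (z k)
    rw [neg_dotProduct, transpose_mulVec_dotProduct] at h1 h2
    have h3 : r k = B *ᵥ (y k - ystar) + C *ᵥ (z k - zstar) := by
      simp only [hr, ← hKKT₃, mulVec_sub]; abel
    have h4 : lamstar ⬝ᵥ r k = lamstar ⬝ᵥ (B *ᵥ (y k - ystar))
        + lamstar ⬝ᵥ (C *ᵥ (z k - zstar)) := by rw [h3, dotProduct_add]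
    simp only [hΘdef]
    linarith
  set D : ℕ → ℝ := fun k => 2 * β k * Θ (k + 1)
    + ε * σg * β k * ((z (k + 1) - zstar) ⬝ᵥ (z (k + 1) - zstar))
    + (1 + γ - γ ^ 2) * β k ^ 2 * (r (k + 1) ⬝ᵥ r (k + 1))
    + 2 * σg * β k * ((z (k + 1) - z k) ⬝ᵥ (z (k + 1) - z k))
    + β k ^ 2 * ((z (k + 1) - z k) ⬝ᵥ Q *ᵥ (z (k + 1) - z k)) with hD
  have hdecr : ∀ k, 2 ≤ k → E (k + 1) + D k ≤ E k := by
    intro k hk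
    obtain ⟨j, rfl⟩ : ∃ j, k = j + 1 := ⟨k - 1, by omega⟩
    have hj : 1 ≤ j := by omega
    have hb := hβpos (j + 1) (by omega)
    have hen := energy_step C hQ (by linarith : (0 : ℝ) < γ) hb (lam (j + 1) - lamstar)
      (lam (j + 1 + 1) - lamstar) (r (j + 1 + 1)) (z (j + 1) - zstar) (z (j + 1 + 1) - zstar)
      (by rw [hiter₃ (j + 1) (by omega)]; simp only [hr]; abel)
      (optimality_step B C b Q (y (j + 1 + 1)) ystar (z (j + 1)) (z (j + 1 + 1)) zstar
        (lam (j + 1)) lamstar hKKT₃ (hiter₁ (j + 1) (by omega) ystar)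
        (hgstr _ _ (hiter₂ (j + 1) (by omega)) zstar))
    rw [show (z (j + 1 + 1) - zstar) - (z (j + 1) - zstar) = z (j + 1 + 1) - z (j + 1) by
      abel] at hen
    have hcr := cross_step C hQ hb (r (j + 1 + 1)) (r (j + 1)) (z (j + 1 + 1) - z (j + 1))
      (z (j + 1) - z j)
      (monotone_step C Q hgstr (lam (j + 1)) (lam j) (r (j + 1 + 1)) (r (j + 1)) (z (j + 1))
        (z (j + 1 + 1)) (z (j + 1) - z j) (hiter₃ j hj) (hiter₂ (j + 1) (by omega))
        (hiter₂ j hj))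
    -- the growth of the penalty parameter is absorbed by the strong convexity of `g`
    have hgrow : β (j + 1 + 1) ^ 2 * M (z (j + 1 + 1) - zstar) ≤
        β (j + 1) ^ 2 * M (z (j + 1 + 1) - zstar) + (1 - ε) * σg * β (j + 1)
          * ((z (j + 1 + 1) - zstar) ⬝ᵥ (z (j + 1 + 1) - zstar)) := by
      have hε' : 0 ≤ 1 - ε := by linarith [hε.2]
      have h1 : β (j + 1 + 1) ^ 2 ≤ β (j + 1) ^ 2 + (1 - ε) * σg * β (j + 1) / Λ := by
        rw [← Real.le_sqrt' (hβpos _ (by omega))]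
        exact hβhi (j + 1) (by omega)
      have h2 : M (z (j + 1 + 1) - zstar) / Λ
          ≤ (z (j + 1 + 1) - zstar) ⬝ᵥ (z (j + 1 + 1) - zstar) := by
        rw [div_le_iff₀ hlamQ, mul_comm]
        exact quadForm_add_le C Q _
      calc β (j + 1 + 1) ^ 2 * M (z (j + 1 + 1) - zstar)
          ≤ (β (j + 1) ^ 2 + (1 - ε) * σg * β (j + 1) / Λ) * M (z (j + 1 + 1) - zstar) :=
            mul_le_mul_of_nonneg_right h1 (hM0 _)
        _ = β (j + 1) ^ 2 * M (z (j + 1 + 1) - zstar)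
            + (1 - ε) * σg * β (j + 1) * (M (z (j + 1 + 1) - zstar) / Λ) := by ring
        _ ≤ _ := by gcongr
    simp only [hE, hD, hΘdef, hMdef, Nat.add_sub_cancel] at hgrow hen ⊢
    linarith
  obtain ⟨K, hK1, hK⟩ : ∃ K : ℝ, 1 ≤ K ∧ ∀ k, 1 ≤ k → E (k + 1) ≤ K * D k := by
    refine ⟨3 / (γ * lamMin (C * Cᵀ)) * (Lg ^ 2 / (ε * σg * βlow)
      + βbar ^ 2 * KQ / (2 * σg * βlow) + (γ - 1) ^ 2 * KC / (1 + γ - γ ^ 2))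
      + βbar ^ 2 * Λ / (ε * σg * βlow) + (γ - 1) ^ 2 / (1 + γ - γ ^ 2) + 1, ?_, ?_⟩
    · have h0 := hε.1
      have hγ0 : 0 < γ := by linarith
      have : 0 ≤ 3 / (γ * lamMin (C * Cᵀ)) * (Lg ^ 2 / (ε * σg * βlow)
        + βbar ^ 2 * KQ / (2 * σg * βlow) + (γ - 1) ^ 2 * KC / (1 + γ - γ ^ 2))
        + βbar ^ 2 * Λ / (ε * σg * βlow) + (γ - 1) ^ 2 / (1 + γ - γ ^ 2) := by positivity
      linarith
    · intro k hk
      have hw : (gradg (z (k + 1)) - gradg zstar) ⬝ᵥ (gradg (z (k + 1)) - gradg zstar)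
          ≤ Lg ^ 2 * ((z (k + 1) - zstar) ⬝ᵥ (z (k + 1) - zstar)) := by
        have h1 := hLip (z (k + 1)) zstar
        have h2 := pow_le_pow_left₀ (Real.sqrt_nonneg _) h1 2
        unfold vnorm at h2
        rwa [mul_pow, Real.sq_sqrt (dotProduct_self_nonneg_real _),
          Real.sq_sqrt (dotProduct_self_nonneg_real _)] at h2
      have hdual := dual_bound C Q (γ := γ) (b := β k) (lam (k + 1) - lamstar) (r (k + 1))
        (z (k + 1) - z k) (gradg (z (k + 1)) - gradg zstar) (hKQ _) (hKC _) (by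
          rw [← subgradient_eq_gradient hgdiff hgrad (hiter₂ k hk),
            ← subgradient_eq_gradient hgdiff hgrad hKKT₂, hiter₃ k hk]
          change Cᵀ *ᵥ (lam k + (γ * β k) • r (k + 1) - lamstar) = _ -
            (-(Cᵀ *ᵥ lam k + β k • (Cᵀ *ᵥ r (k + 1)) + _) - _)
          rw [mulVec_sub, mulVec_add, mulVec_smul]
          module)
      have := merit_le_decrease (N := (lam (k + 1) - lamstar) ⬝ᵥ (lam (k + 1) - lamstar))
        (Lg := Lg) hγ1 hβl (hβbd k hk).1 (hβpos (k + 1) (by omega)).le (hβbd k hk).2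
        (hβbd (k + 1) (by omega)).2 hε.1 hσg hδ hC hlamQ.le hKQ0 hKC0
        (dotProduct_self_nonneg_real (z (k + 1) - zstar))
        (dotProduct_self_nonneg_real (r (k + 1)))
        (dotProduct_self_nonneg_real (z (k + 1) - z k)) (psd_nonneg hQ (z (k + 1) - z k))
        (hM0 (z (k + 1) - zstar)) (hΘ0 (k + 1)) (quadForm_add_le C Q _)
        (by linarith)
      simpa only [hE, hD, Nat.add_sub_cancel] using this
  have hEparts : ∀ k, 2 ≤ k →
      (lam k - lamstar) ⬝ᵥ (lam k - lamstar) ≤ γ * E k ∧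
      r k ⬝ᵥ r k ≤ 1 / ((γ - 1) ^ 2 * βlow ^ 2) * E k ∧ 0 ≤ E k := by
    intro k hk
    have hγ0 : 0 < γ := by linarith
    have hγ0' : 0 < γ - 1 := by linarith
    have hb := (hβbd (k - 1) (by omega)).1
    have t1 : 0 ≤ ((lam k - lamstar) ⬝ᵥ (lam k - lamstar)) / γ :=
      div_nonneg (dotProduct_self_nonneg_real _) hγ0.le
    have t2 : 0 ≤ β k ^ 2 * M (z k - zstar) := mul_nonneg (sq_nonneg _) (hM0 _)
    have hrk := dotProduct_self_nonneg_real (r k)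
    have t3 : 0 ≤ (γ - 1) ^ 2 * β (k - 1) ^ 2 * (r k ⬝ᵥ r k) := by positivity
    have t4 : 0 ≤ β (k - 1) ^ 2 * ((z k - z (k - 1)) ⬝ᵥ Q *ᵥ (z k - z (k - 1))) :=
      mul_nonneg (sq_nonneg _) (psd_nonneg hQ _)
    refine ⟨?_, ?_, by simp only [hE]; positivity⟩
    · rw [← div_le_iff₀' hγ0]
      simp only [hE]; linarith
    · rw [one_div, inv_mul_eq_div, le_div_iff₀ (by positivity)]
      have : (γ - 1) ^ 2 * βlow ^ 2 * (r k ⬝ᵥ r k)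
          ≤ (γ - 1) ^ 2 * β (k - 1) ^ 2 * (r k ⬝ᵥ r k) := by gcongr
      simp only [hE]; linarith
  have hK0 : 0 < K := by linarith
  set ρ := K / (K + 1) with hρdef
  have hρ0 : 0 < ρ := by positivity
  have hρ1 : ρ < 1 := by rw [hρdef, div_lt_one (by linarith)]; linarith
  have hgeo := geometric_decay (E := E) hρ0 (by
    intro k hk
    have h1 := hdecr k hk
    have h2 := hK k (by omega)
    rw [hρdef, div_mul_eq_mul_div, le_div_iff₀ (by linarith)]
    nlinarith)
  set c₀ := E 2 / ρ ^ 2 with hc₀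
  have hc₀0 : 0 ≤ c₀ := div_nonneg (hEparts 2 le_rfl).2.2 (by positivity)
  -- the gap at `k + 1` is bounded by the decrease at step `k`
  have hgap : ∀ k, 2 ≤ k → Θ k ≤ (Θ 2 / ρ ^ 2 + c₀ / (2 * βlow * ρ)) * ρ ^ k := by
    intro k hk
    have hΘ2 := hΘ0 2
    rcases hk.eq_or_lt with rfl | hk3
    · have h1 : 0 ≤ c₀ / (2 * βlow * ρ) * ρ ^ 2 := by positivity
      have h2 : Θ 2 / ρ ^ 2 * ρ ^ 2 = Θ 2 := div_mul_cancel₀ _ (by positivity)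
      rw [add_mul]
      linarith
    · obtain ⟨j, rfl⟩ : ∃ j, k = j + 1 := ⟨k - 1, by omega⟩
      have hj : 2 ≤ j := by omega
      have h1 := hdecr j hj
      have h2 := (hEparts (j + 1) (by omega)).2.2
      have hb := (hβbd j (by omega)).1
      have hb0 := hβpos j (by omega)
      have hε0 := hε.1
      have h3 : 2 * β j * Θ (j + 1) ≤ D j := by
        have hu := dotProduct_self_nonneg_real (z (j + 1) - zstar)
        have hrr := dotProduct_self_nonneg_real (r (j + 1))
        have hz := dotProduct_self_nonneg_real (z (j + 1) - z j)
        have hq := psd_nonneg hQ (z (j + 1) - z j)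
        have s1 : 0 ≤ ε * σg * β j * ((z (j + 1) - zstar) ⬝ᵥ (z (j + 1) - zstar)) := by
          positivity
        have s2 : 0 ≤ (1 + γ - γ ^ 2) * β j ^ 2 * (r (j + 1) ⬝ᵥ r (j + 1)) := by positivity
        have s3 : 0 ≤ 2 * σg * β j * ((z (j + 1) - z j) ⬝ᵥ (z (j + 1) - z j)) := by
          positivity
        have s4 : 0 ≤ β j ^ 2 * ((z (j + 1) - z j) ⬝ᵥ Q *ᵥ (z (j + 1) - z j)) := by
          positivity
        simp only [hD]
        linarith
      have h4 : 2 * βlow * Θ (j + 1) ≤ 2 * β j * Θ (j + 1) := by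
        have := hΘ0 (j + 1)
        gcongr
      have h5 := hgeo j hj
      have h6 : Θ (j + 1) ≤ c₀ * ρ ^ j / (2 * βlow) := by
        rw [le_div_iff₀ (by positivity)]
        linarith
      have h7 : c₀ * ρ ^ j / (2 * βlow) = c₀ / (2 * βlow * ρ) * ρ ^ (j + 1) := by
        field_simp
        ring
      have h8 : 0 ≤ Θ 2 / ρ ^ 2 * ρ ^ (j + 1) := by positivity
      rw [add_mul]
      linarith
  have hΘ2 := hΘ0 2
  have hγ0 : 0 < γ := by linarith
  have a1 : 0 ≤ Θ 2 / ρ ^ 2 + c₀ / (2 * βlow * ρ) := by positivity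
  have a2 : 0 ≤ 1 / ((γ - 1) ^ 2 * βlow ^ 2) * c₀ := by positivity
  have a3 : 0 ≤ γ * c₀ := by positivity
  refine ⟨(Θ 2 / ρ ^ 2 + c₀ / (2 * βlow * ρ)) + 1 / ((γ - 1) ^ 2 * βlow ^ 2) * c₀ + γ * c₀,
    by positivity, ρ, hρ0, hρ1, fun k hk => ?_⟩
  have hp : 0 ≤ ρ ^ k := by positivity
  have p1 := mul_nonneg a1 hp
  have p2 := mul_nonneg a2 hp
  have p3 := mul_nonneg a3 hp
  have hEk := hgeo k hk
  obtain ⟨q1, q2, -⟩ := hEparts k hk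
  refine ⟨?_, ?_, ?_⟩
  · have h1 := hgap k hk
    have h2 : lamstar ⬝ᵥ (B *ᵥ ystar + C *ᵥ zstar - b) = 0 := by
      rw [hKKT₃, sub_self, dotProduct_zero]
    rw [h2, add_zero]
    change Θ k ≤ _
    linarith
  · have h1 : 1 / ((γ - 1) ^ 2 * βlow ^ 2) * E k
        ≤ 1 / ((γ - 1) ^ 2 * βlow ^ 2) * (c₀ * ρ ^ k) := by gcongr
    change r k ⬝ᵥ r k ≤ _
    linarith
  · have h1 : γ * E k ≤ γ * (c₀ * ρ ^ k) := by gcongr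
    linarith
end
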